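/- arXiv:1509.04188 — 6 statements merged into one kernel-verified Lean document; each statement's English description precedes it below -/
import Mathlib

section
/- For every integer d ≥ 1 there exists a set F ⊂ ℝ^{d+1} of finite density (i.e. limsup_{T→∞} #(F ∩ B₂(0,T))/T^{d+1} < ∞, where B₂(0,T) is the Euclidean ball of radius T centred at the origin) which is a dense forest with visibility function V(ε) = O_{η,d}(ε^{−2d−η}) for every η > 0; that is, for every η > 0 there exists a constant C = C(η,d) > 0 such that for all sufficiently small ε > 0, for every x ∈ ℝ^{d+1} and every v ∈ ℝ^{d+1} with ‖v‖₂ = 1, there exist t ∈ [0, C·ε^{−2d−η}] and f ∈ F with ‖x + t·v − f‖₂ ≤ ε. -/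
/-!
The forest is a union over the scales `ε = 2⁻ᵏ` of periodic sets `G k`. At scale `k` the grid
`(1/M) ℤ^{d+1}`, with `M = 3(d+1) 2ᵏ`, is reduced modulo `Q = M^{d+1} 2ᵏ`, so that the period is
`L = Q / M`, of order `2^{k(d+1)}`. Every real segment of length about `L` runs within `2⁻ᵏ` of a
discrete segment of `Q` distinct points of `(ℤ/Q)^{d+1}` (`exists_discrete_segment`, `card_tube`).
There are only polynomially many (in `Q`) such discrete segments and each fills a proportion
`Q^{-d}` of the torus, so a greedy choice (`exists_hitting_of_greedy`) gives a set `P` of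
`O(k) Q^d` residues meeting all of them. The set of grid points with residue in `P` then has density
`O(k) Q^d / L^{d+1} = O(k) 2⁻ᵏ`, which is summable in `k`.

The points of `G k` in the ball of radius `L` are discarded, so a ball of radius `T` sees only the
scales whose period is at most `T`, where counting points by whole periods is accurate up to a
constant. Discarding costs only a constant factor in visibility, since a line meets a ball in one
bounded interval (`exists_start`). The resulting visibility is `O(ε^{-(d+1)})`, and
`d + 1 ≤ 2d ≤ 2d + η`.
-/

open scoped BigOperators

/-! ### Hitting sets in the discrete torus -/

/-- Greedy hitting sets: if every `S i` fills a proportion at least `1/m` of `X`, some point lies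
in a proportion `1/m` of the sets not yet met, so `N` choices leave at most a fraction
`(1 - 1/m)^N` of the family unmet. -/
theorem exists_hitting_of_greedy {X ι : Type*} [Fintype X] [Nonempty X] [DecidableEq X]
    (T : Finset ι) (S : ι → Finset X) (m : ℕ) (hm : 0 < m)
    (hS : ∀ i ∈ T, Fintype.card X ≤ m * (S i).card) (N : ℕ) :
    ∃ P : Finset X, P.card ≤ N ∧
      ((T.filter (fun i => Disjoint (S i) P)).card : ℝ) ≤ T.card * (1 - 1 / (m : ℝ)) ^ N := by
  classical
  have hm0 : (0 : ℝ) < m := by exact_mod_cast hm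
  have hm1 : (1 : ℝ) ≤ m := by exact_mod_cast hm
  have hfac : (0 : ℝ) ≤ 1 - 1 / (m : ℝ) := by
    rw [sub_nonneg, div_le_one hm0]; exact hm1
  induction N with
  | zero => exact ⟨∅, by simp, by simp⟩
  | succ N ih =>
    obtain ⟨P, hP, hle⟩ := ih
    set U := T.filter (fun i => Disjoint (S i) P) with hU
    -- Double counting of the pairs `x ∈ S i`, with `i` ranging over the sets not yet met.
    have hdc : ∑ x : X, (U.filter (fun i => x ∈ S i)).card = ∑ i ∈ U, (S i).card := by
      simp only [Finset.card_filter]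
      rw [Finset.sum_comm]
      refine Finset.sum_congr rfl fun i _ => ?_
      simp
    have hsum : U.card * Fintype.card X ≤ ∑ x : X, m * (U.filter (fun i => x ∈ S i)).card := by
      rw [← Finset.mul_sum, hdc, Finset.mul_sum, ← smul_eq_mul]
      exact Finset.card_nsmul_le_sum U _ _ fun i hi => hS i (Finset.mem_filter.1 hi).1
    obtain ⟨x, -, hx⟩ : ∃ x ∈ (Finset.univ : Finset X),
        U.card ≤ m * (U.filter (fun i => x ∈ S i)).card := by
      apply Finset.exists_le_of_sum_le Finset.univ_nonempty
      simpa [mul_comm] using hsum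
    refine ⟨insert x P, (Finset.card_insert_le _ _).trans (by omega), ?_⟩
    have hsub : T.filter (fun i => Disjoint (S i) (insert x P))
        = U.filter (fun i => ¬ x ∈ S i) := by
      ext i
      simp only [hU, Finset.mem_filter, Finset.disjoint_insert_right]
      tauto
    have hcard := Finset.card_filter_add_card_filter_not (s := U) (fun i => x ∈ S i)
    rw [hsub]
    have hcard' : ((U.filter (fun i => x ∈ S i)).card : ℝ) +
        ((U.filter (fun i => ¬ x ∈ S i)).card : ℝ) = U.card := by exact_mod_cast hcard
    have hx' : (U.card : ℝ) ≤ m * ((U.filter (fun i => x ∈ S i)).card : ℝ) := by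
      exact_mod_cast hx
    have h1 : (U.card : ℝ) / m ≤ ((U.filter (fun i => x ∈ S i)).card : ℝ) := by
      rw [div_le_iff₀ hm0]; linarith
    calc ((U.filter (fun i => ¬ x ∈ S i)).card : ℝ) ≤ U.card * (1 - 1 / (m : ℝ)) := by
          have : (U.card : ℝ) * (1 - 1 / (m : ℝ)) = U.card - U.card / m := by ring
          linarith
      _ ≤ (T.card * (1 - 1 / (m : ℝ)) ^ N) * (1 - 1 / (m : ℝ)) := by gcongr
      _ = _ := by ring

/-- The discrete segment with base point `a` and displacement `b` in the torus `(ℤ/Q)ⁿ`: the points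
`a + ⌊j b / Q⌋` for `0 ≤ j < Q`, with the floor (here integer division by `Q > 0`) taken
coordinatewise. -/
def tube (Q n : ℕ) (a : Fin n → ZMod Q) (b : Fin n → ℤ) : Finset (Fin n → ZMod Q) :=
  (Finset.range Q).image fun (j : ℕ) l => a l + (((j : ℤ) * b l / (Q : ℤ) : ℤ) : ZMod Q)

/-- The coordinate `i` alone, which is `a i ± j`, separates the `Q` points of the segment. -/
theorem card_tube {Q n : ℕ} (hQ : 0 < Q) (a : Fin n → ZMod Q) (b : Fin n → ℤ) (i : Fin n)
    (hi : |b i| = Q) : (tube Q n a b).card = Q := by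
  have hQ' : (Q : ℤ) ≠ 0 := by exact_mod_cast hQ.ne'
  rw [tube, Finset.card_image_of_injOn, Finset.card_range]
  intro j hj j' hj' h
  have h1 := congrFun h i
  simp only [Finset.coe_range, Set.mem_Iio] at hj hj'
  have h2 : ((j : ℕ) : ZMod Q) = (j' : ℕ) := by
    rcases abs_eq (by positivity) |>.1 hi with hb | hb
    · simpa only [hb, Int.mul_ediv_cancel _ hQ', add_right_inj, Int.cast_natCast] using h1
    · simpa only [hb, mul_neg, ← neg_mul, Int.mul_ediv_cancel _ hQ', add_right_inj, Int.cast_neg,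
        neg_inj, Int.cast_natCast] using h1
  rw [ZMod.natCast_eq_natCast_iff'] at h2
  rwa [Nat.mod_eq_of_lt hj, Nat.mod_eq_of_lt hj'] at h2

/-- Some set of at most `b Q^d` residues meets all discrete segments of sup-norm length exactly `Q`, as soon as
`2^b` bounds the number of pairs (base point, displacement). -/
theorem exists_hitting_tubes (d Q b : ℕ) (hQ : 0 < Q) (hb : 0 < b)
    (hQb : (Q * (2 * Q + 1)) ^ (d + 1) ≤ 2 ^ b) :
    ∃ P : Finset (Fin (d + 1) → ZMod Q), P.card ≤ Q ^ d * b ∧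
      ∀ (a : Fin (d + 1) → ZMod Q) (c : Fin (d + 1) → ℤ), (∀ l, |c l| ≤ Q) →
        (∃ i, |c i| = Q) → ∃ p ∈ P, p ∈ tube Q (d + 1) a c := by
  classical
  have : NeZero Q := ⟨hQ.ne'⟩
  let T₀ : Finset ((Fin (d + 1) → ZMod Q) × (Fin (d + 1) → ℤ)) :=
    Finset.univ ×ˢ Fintype.piFinset fun _ => Finset.Icc (-(Q : ℤ)) Q
  let T := T₀.filter fun s => ∃ i, |s.2 i| = (Q : ℤ)
  have hT : T.card ≤ 2 ^ b := by
    refine (Finset.card_filter_le _ _).trans (le_trans (le_of_eq ?_) hQb)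
    have : ((Q : ℤ) + 1 + Q).toNat = 2 * Q + 1 := by omega
    simp [T₀, Finset.card_product, Fintype.card_piFinset, ZMod.card, mul_pow, this]
  have hm : 0 < Q ^ d := by positivity
  obtain ⟨P, hP, hle⟩ := exists_hitting_of_greedy T (fun s => tube Q (d + 1) s.1 s.2) (Q ^ d) hm
    (by
      rintro ⟨a, c⟩ hs
      obtain ⟨i, hi⟩ := (Finset.mem_filter.1 hs).2
      have hi' : |c i| = (Q : ℤ) := hi
      rw [card_tube hQ a c i hi']
      simp [ZMod.card, pow_succ]) (Q ^ d * b)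
  refine ⟨P, hP, fun a c hc hi => ?_⟩
  have hlt : (T.card : ℝ) * (1 - 1 / ((Q ^ d : ℕ) : ℝ)) ^ (Q ^ d * b) < 1 := by
    have hm1 : (1 : ℝ) ≤ ((Q ^ d : ℕ) : ℝ) := by exact_mod_cast hm
    have h0 : (0 : ℝ) ≤ 1 - 1 / ((Q ^ d : ℕ) : ℝ) := by
      rw [sub_nonneg, div_le_one (by linarith)]; exact hm1
    have h1 : (1 - 1 / ((Q ^ d : ℕ) : ℝ)) ^ (Q ^ d) ≤ Real.exp (-1) :=
      Real.one_sub_div_pow_le_exp_neg hm1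
    have h2 : (T.card : ℝ) ≤ 2 ^ b := by exact_mod_cast hT
    have h3 : Real.exp (-1) < 1 / 2 := by
      have := Real.exp_neg_one_lt_d9; linarith
    calc (T.card : ℝ) * (1 - 1 / ((Q ^ d : ℕ) : ℝ)) ^ (Q ^ d * b)
        ≤ 2 ^ b * Real.exp (-1) ^ b := by
          rw [pow_mul]; gcongr
      _ = (2 * Real.exp (-1)) ^ b := by rw [mul_pow]
      _ < 1 := pow_lt_one₀ (by positivity) (by linarith) hb.ne'
  have hempty : T.filter (fun s => Disjoint (tube Q (d + 1) s.1 s.2) P) = ∅ := by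
    rw [← Finset.card_eq_zero]
    have := hle.trans_lt hlt
    exact Nat.lt_one_iff.1 (by exact_mod_cast this)
  have hmem : (a, c) ∈ T := by
    simp only [T, T₀, Finset.mem_filter, Finset.mem_product, Finset.mem_univ, true_and,
      Fintype.mem_piFinset, Finset.mem_Icc]
    exact ⟨fun l => abs_le.1 (hc l), hi⟩
  have hnd : ¬ Disjoint (tube Q (d + 1) a c) P := fun h =>
    Finset.eq_empty_iff_forall_notMem.1 hempty (a, c) (Finset.mem_filter.2 ⟨hmem, h⟩)
  obtain ⟨p, hp, hpP⟩ := Finset.not_disjoint_iff.1 hnd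
  exact ⟨p, hpP, hp⟩

/-! ### Discretizing real segments -/

/-- Every real segment of length `(d+1) Q / M` is followed, up to `3 / M` in each coordinate, by a
discrete segment of the grid `(1/M) ℤ^{d+1}` whose displacement has sup norm exactly `Q`. Of the
error, one unit `1 / M` comes from rounding the base point, one from rounding the displacement and
one from the floor in `tube`. -/
theorem exists_discrete_segment {d M Q : ℕ} (hM : 0 < M) (hQ : 0 < Q)
    (x v : EuclideanSpace ℝ (Fin (d + 1))) (hv : ‖v‖ = 1) :
    ∃ a c : Fin (d + 1) → ℤ, (∀ l, |c l| ≤ Q) ∧ (∃ i, |c i| = Q) ∧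
      ∀ j : ℕ, j < Q → ∃ t ∈ Set.Icc (0 : ℝ) (Q * (d + 1) / M), ∀ l,
        |x l + t * v l - ((a l + (j : ℤ) * c l / (Q : ℤ) : ℤ) : ℝ) / M| ≤ 3 / M := by
  have hM0 : (0 : ℝ) < M := by exact_mod_cast hM
  have hQ0 : (0 : ℝ) < Q := by exact_mod_cast hQ
  obtain ⟨i, -, hi⟩ := Finset.exists_max_image (Finset.univ : Finset (Fin (d + 1)))
    (fun l => |v l|) Finset.univ_nonempty
  set m := |v i| with hm
  have hmle : ∀ l, |v l| ≤ m := fun l => hi l (Finset.mem_univ l)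
  have hm1 : m ≤ 1 := by
    have := PiLp.norm_apply_le v i
    rwa [hv, Real.norm_eq_abs] at this
  have hmn : 0 ≤ m := abs_nonneg _
  -- `1 = ‖v‖² ≤ (d+1) m² ≤ (d+1) m`.
  have hmlow : 1 ≤ (d + 1) * m := by
    have h1 : ‖v‖ ^ 2 = ∑ l, |v l| ^ 2 := by
      rw [EuclideanSpace.norm_eq, Real.sq_sqrt (by positivity)]; rfl
    rw [hv] at h1
    have h2 : ∑ l, |v l| ^ 2 ≤ ∑ l : Fin (d + 1), m := by
      refine Finset.sum_le_sum fun l _ => ?_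
      have := hmle l
      have := abs_nonneg (v l)
      nlinarith
    simp at h2
    simp at h1
    linarith
  have hm0 : 0 < m := by
    rcases hmn.eq_or_lt with h | h
    · rw [← h] at hmlow; simp at hmlow; linarith
    · exact h
  have hw : ∀ l, |v l / m| ≤ 1 := fun l => by
    rw [abs_div, abs_of_pos hm0, div_le_one hm0]; exact hmle l
  refine ⟨fun l => ⌊M * x l⌋, fun l => ⌊Q * (v l / m)⌋, fun l => ?_, ⟨i, ?_⟩, fun j hj => ?_⟩
  · obtain ⟨h1, h2⟩ := abs_le.1 (hw l)
    rw [abs_le]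
    constructor
    · rw [Int.le_floor]; push_cast; nlinarith
    · rw [Int.floor_le_iff]; push_cast; nlinarith
  · rcases abs_choice (v i) with h | h
    · have : v i / m = 1 := by rw [hm, h]; rw [hm, h] at hm0; field_simp
      simp [this]
    · have : v i / m = -1 := by
        rw [hm, h]; rw [hm, h] at hm0
        have : v i ≠ 0 := by intro h0; simp [h0] at hm0
        field_simp
      have h2 : (Q : ℝ) * -1 = ((-Q : ℤ) : ℝ) := by push_cast; ring
      simp only [this]
      rw [h2, Int.floor_intCast]; simp
  · refine ⟨j / (M * m), ⟨by positivity, ?_⟩, fun l => ?_⟩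
    · rw [div_le_div_iff₀ (by positivity) hM0]
      have : (j : ℝ) ≤ Q := by exact_mod_cast hj.le
      calc (j : ℝ) * M ≤ Q * M := by gcongr
        _ = Q * M * 1 := by ring
        _ ≤ Q * M * ((d + 1) * m) := by gcongr
        _ = _ := by ring
    · set w := v l / m with hwdef
      have hfl : ((j : ℤ) * ⌊(Q : ℝ) * w⌋ / (Q : ℤ) : ℤ)
          = ⌊((j : ℝ) * (⌊(Q : ℝ) * w⌋ : ℤ) / (Q : ℕ) : ℝ)⌋ := by
        rw [Int.floor_div_natCast]
        have : ((j : ℝ) * (⌊(Q : ℝ) * w⌋ : ℤ) : ℝ) = (((j : ℤ) * ⌊(Q : ℝ) * w⌋ : ℤ) : ℝ) := by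
          push_cast; ring
        rw [this, Int.floor_intCast]
      rw [hfl]
      set c := ⌊(Q : ℝ) * w⌋
      have hc1 : (c : ℝ) ≤ Q * w := Int.floor_le _
      have hc2 : (Q : ℝ) * w < c + 1 := Int.lt_floor_add_one _
      have ha1 : (⌊M * x l⌋ : ℝ) ≤ M * x l := Int.floor_le _
      have ha2 : (M : ℝ) * x l < ⌊M * x l⌋ + 1 := Int.lt_floor_add_one _
      have hf1 := Int.floor_le ((j : ℝ) * (c : ℤ) / (Q : ℕ) : ℝ)
      have hf2 := Int.lt_floor_add_one ((j : ℝ) * (c : ℤ) / (Q : ℕ) : ℝ)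
      have hj' : (j : ℝ) ≤ Q := by exact_mod_cast hj.le
      have hj0 : (0 : ℝ) ≤ j := by positivity
      have hd1 : (j : ℝ) * c / Q ≤ j * w := by
        rw [div_le_iff₀ hQ0]; nlinarith
      have hd2 : (j : ℝ) * w ≤ j * c / Q + 1 := by
        rw [← sub_le_iff_le_add, le_div_iff₀ hQ0]; nlinarith
      have key : x l + (j : ℝ) / (M * m) * v l
          - ((⌊M * x l⌋ + ⌊(j : ℝ) * (c : ℤ) / (Q : ℕ)⌋ : ℤ) : ℝ) / M
          = ((M * x l - ⌊M * x l⌋) + (j * w - ⌊(j : ℝ) * (c : ℤ) / (Q : ℕ)⌋)) / M := by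
        rw [hwdef]; push_cast; field_simp; ring
      rw [key, abs_div, abs_of_pos hM0]
      gcongr
      rw [abs_le]
      constructor <;> linarith

/-! ### Periodic sets with a hole -/

/-- The points of `(1/M) ℤ^{d+1}` whose numerators have residue modulo `Q` in `P`, outside the open
ball of radius the period `Q / M`. -/
def scaleSet (d M Q : ℕ) (P : Finset (Fin (d + 1) → ZMod Q)) :
    Set (EuclideanSpace ℝ (Fin (d + 1))) :=
  {p | (∃ z : Fin (d + 1) → ℤ, (fun l => (z l : ZMod Q)) ∈ P ∧ ∀ l, p l = z l / (M : ℝ)) ∧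
    (Q : ℝ) / M ≤ ‖p‖}

/-- The count per period cell: a ball of radius `T ≥ Q / M` meets at most `(4 T / (Q / M))^{d+1}`
cells, and a smaller ball contains no point at all. -/
theorem scaleSet_count {d M Q : ℕ} (hM : 0 < M) (hQ : 0 < Q)
    (P : Finset (Fin (d + 1) → ZMod Q)) (T : ℝ) (hT : 0 ≤ T) :
    (scaleSet d M Q P ∩ Metric.closedBall 0 T).Finite ∧
      ((scaleSet d M Q P ∩ Metric.closedBall 0 T).ncard : ℝ)
        ≤ P.card * (4 * T / (Q / M)) ^ (d + 1) := by
  classical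
  have hM0 : (0 : ℝ) < M := by exact_mod_cast hM
  have hQ0 : (0 : ℝ) < Q := by exact_mod_cast hQ
  have : NeZero Q := ⟨hQ.ne'⟩
  rcases lt_or_ge T ((Q : ℝ) / M) with hlt | hge
  · have : scaleSet d M Q P ∩ Metric.closedBall 0 T = ∅ := by
      rw [Set.eq_empty_iff_forall_notMem]
      rintro p ⟨⟨-, hp⟩, hpT⟩
      rw [mem_closedBall_zero_iff] at hpT
      linarith
    rw [this]
    refine ⟨Set.finite_empty, ?_⟩
    simp only [Set.ncard_empty, Nat.cast_zero]
    positivity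
  · set s : ℝ := T / (Q / M) with hs
    have hs1 : 1 ≤ s := by rw [hs, one_le_div (by positivity)]; exact hge
    let I : Finset ℤ := Finset.Icc ⌊-s⌋ ⌊s⌋
    let W : Finset (EuclideanSpace ℝ (Fin (d + 1))) :=
      (P ×ˢ Fintype.piFinset fun _ : Fin (d + 1) => I).image fun rq =>
        WithLp.toLp 2 fun l => (((rq.1 l).val : ℝ) + Q * (rq.2 l : ℝ)) / (M : ℝ)
    have hsub : scaleSet d M Q P ∩ Metric.closedBall 0 T ⊆ W := by
      rintro p ⟨⟨⟨z, hz, hpz⟩, -⟩, hpT⟩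
      rw [mem_closedBall_zero_iff] at hpT
      refine Finset.mem_coe.2 (Finset.mem_image.2 ⟨(fun l => (z l : ZMod Q), fun l => z l / (Q : ℤ)),
        Finset.mem_product.2 ⟨hz, Fintype.mem_piFinset.2 fun l => ?_⟩, ?_⟩)
      · have h1 := (PiLp.norm_apply_le p l).trans hpT
        rw [Real.norm_eq_abs, hpz l, abs_le] at h1
        have h2 : (z l / (Q : ℤ) : ℤ) = ⌊(z l : ℝ) / (Q : ℕ)⌋ := by
          rw [Int.floor_div_natCast, Int.floor_intCast]
        have h3 : (z l : ℝ) / Q = (z l / M) / (Q / M) := by field_simp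
        have h4 : (z l : ℝ) / Q ≤ s := by rw [h3, hs]; gcongr; exact h1.2
        have h5 : -s ≤ (z l : ℝ) / Q := by rw [h3, hs, ← neg_div]; gcongr; exact h1.1
        rw [Finset.mem_Icc]
        simp only [h2]
        exact ⟨Int.floor_mono h5, Int.floor_mono h4⟩
      · ext l
        have h1 : (((z l : ZMod Q)).val : ℤ) = z l % Q := ZMod.val_intCast (z l)
        have h2 : (((z l : ZMod Q)).val : ℝ) = ((z l % Q : ℤ) : ℝ) := by
          rw [← h1]; simp
        have h3 : ((z l % Q : ℤ) : ℝ) + Q * ((z l / (Q : ℤ) : ℤ) : ℝ) = z l := by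
          exact_mod_cast Int.emod_add_mul_ediv (z l) Q
        simp only [hpz l, h2, h3]
    have hI : (I.card : ℝ) ≤ 4 * s := by
      have h0 : ⌊-s⌋ ≤ ⌊s⌋ := Int.floor_mono (by linarith)
      have h1 : ((I.card : ℤ) : ℝ) = ((⌊s⌋ + 1 - ⌊-s⌋ : ℤ) : ℝ) := by
        simp only [I, Int.card_Icc]
        rw [Int.toNat_of_nonneg (by omega)]
      have h2 := Int.floor_le s
      have h3 := Int.lt_floor_add_one (-s)
      push_cast at h1
      linarith
    refine ⟨W.finite_toSet.subset hsub, ?_⟩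
    have hW : W.card ≤ P.card * I.card ^ (d + 1) := by
      refine Finset.card_image_le.trans (le_of_eq ?_)
      simp [Finset.card_product, Fintype.card_piFinset]
    calc ((scaleSet d M Q P ∩ Metric.closedBall 0 T).ncard : ℝ) ≤ W.card := by
          have := Set.ncard_le_ncard hsub W.finite_toSet
          rw [Set.ncard_coe_finset] at this
          exact_mod_cast this
      _ ≤ P.card * (I.card : ℝ) ^ (d + 1) := by exact_mod_cast hW
      _ ≤ P.card * (4 * s) ^ (d + 1) := by gcongr
      _ = _ := by rw [hs, mul_div_assoc]

/-! ### Visibility at a single scale -/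

theorem norm_le_of_coord {d : ℕ} (u : EuclideanSpace ℝ (Fin (d + 1))) {r : ℝ} (hr : 0 ≤ r)
    (h : ∀ l, |u l| ≤ r) : ‖u‖ ≤ (d + 1) * r := by
  rw [EuclideanSpace.norm_eq]
  apply Real.sqrt_le_iff.2
  refine ⟨by positivity, ?_⟩
  calc ∑ l, ‖u l‖ ^ 2 ≤ ∑ l : Fin (d + 1), r ^ 2 := by
        refine Finset.sum_le_sum fun l _ => ?_
        rw [Real.norm_eq_abs]
        have := h l
        gcongr
    _ = (d + 1) * r ^ 2 := by simp
    _ ≤ ((d + 1) * r) ^ 2 := by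
        have : (0 : ℝ) ≤ d := by positivity
        have : 0 ≤ r ^ 2 := by positivity
        have h3 : ((d + 1 : ℝ) * r) ^ 2 - (d + 1) * r ^ 2 = d * (d + 1) * r ^ 2 := by ring
        have : 0 ≤ (d : ℝ) * (d + 1) * r ^ 2 := by positivity
        linarith

/-- A ray has a subsegment of length `V`, starting before time `2R + V`, outside the open ball of
radius `R`: along the ray, `‖x + t v‖ ≥ |⟨x, v⟩ + t|`. -/
theorem exists_start {E : Type*} [NormedAddCommGroup E] [InnerProductSpace ℝ E] (x v : E)
    (hv : ‖v‖ = 1) {R V : ℝ} (hR : 0 ≤ R) (hV : 0 ≤ V) :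
    ∃ s ∈ Set.Icc 0 (2 * R + V), ∀ t ∈ Set.Icc 0 V, R ≤ ‖x + (s + t) • v‖ := by
  have key : ∀ t : ℝ, |inner ℝ x v + t| ≤ ‖x + t • v‖ := fun t => by
    have h := abs_real_inner_le_norm (x + t • v) v
    rwa [inner_add_left, real_inner_smul_left, real_inner_self_eq_norm_sq, hv, one_pow, mul_one,
      mul_one] at h
  by_cases hc : -(R + V) ≤ inner ℝ x v
  · refine ⟨2 * R + V, ⟨by positivity, le_rfl⟩, fun t ht => le_trans ?_ (key _)⟩
    refine le_trans ?_ (le_abs_self _)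
    linarith [ht.1]
  · refine ⟨0, ⟨le_rfl, by positivity⟩, fun t ht => le_trans ?_ (key _)⟩
    refine le_trans ?_ (neg_le_abs _)
    push Not at hc
    linarith [ht.2]

/-- The set at scale `2⁻ᵏ`: its visibility is `O(2^{k(d+1)})`, it has no point of norm less than
`2ᵏ`, and its density is `O((k+1) / 2ᵏ)`. -/
theorem exists_scale (d k : ℕ) :
    ∃ G : Set (EuclideanSpace ℝ (Fin (d + 1))),
      (∀ x v : EuclideanSpace ℝ (Fin (d + 1)), ‖v‖ = 1 →
        ∃ t ∈ Set.Icc (0 : ℝ) ((2 * d + 6) * (3 * (d + 1)) ^ d * 2 ^ (k * (d + 1))),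
          ∃ f ∈ G, ‖x + t • v - f‖ ≤ (2 ^ k)⁻¹) ∧
      (∀ f ∈ G, (2 : ℝ) ^ k ≤ ‖f‖) ∧
      (∀ T : ℝ, 0 ≤ T → (G ∩ Metric.closedBall 0 T).Finite ∧
        ((G ∩ Metric.closedBall 0 T).ncard : ℝ)
          ≤ ((3 * ((3 * (d + 1)) ^ (d + 1)) ^ 2 + 2 * (d + 2)) * (d + 1)) * (k + 1) / 2 ^ k
            * (4 * T) ^ (d + 1)) := by
  -- With these `M` and `Q`, the error `(d+1) · 3 / M` is `2⁻ᵏ` and `M^{d+1} / Q = 2⁻ᵏ`.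
  set M : ℕ := 3 * (d + 1) * 2 ^ k with hMdef
  set Q : ℕ := M ^ (d + 1) * 2 ^ k with hQdef
  set D : ℕ := (3 * (d + 1)) ^ (d + 1) with hD
  set B : ℕ := (3 * D ^ 2 + 2 * (d + 2)) * (d + 1) with hB
  have hM : 0 < M := by positivity
  have hQ : 0 < Q := by positivity
  have hM0 : (0 : ℝ) < M := by exact_mod_cast hM
  have hQ0 : (0 : ℝ) < Q := by exact_mod_cast hQ
  have hb : 0 < B * (k + 1) := by positivity
  have hQb : (Q * (2 * Q + 1)) ^ (d + 1) ≤ 2 ^ (B * (k + 1)) := by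
    have h1 : Q = D * 2 ^ (k * (d + 2)) := by
      rw [hQdef, hMdef, hD, mul_pow]; ring
    have h2 : Q * (2 * Q + 1) ≤ 3 * D ^ 2 * 2 ^ (2 * (d + 2) * k) := by
      have : 3 * D ^ 2 * 2 ^ (2 * (d + 2) * k) = 3 * Q ^ 2 := by rw [h1]; ring
      rw [this]; nlinarith
    have h3 : 3 * D ^ 2 ≤ 2 ^ (3 * D ^ 2) := Nat.lt_two_pow_self.le
    calc (Q * (2 * Q + 1)) ^ (d + 1) ≤ (2 ^ (3 * D ^ 2) * 2 ^ (2 * (d + 2) * k)) ^ (d + 1) := by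
          exact Nat.pow_le_pow_left (h2.trans (Nat.mul_le_mul_right _ h3)) _
      _ = 2 ^ ((3 * D ^ 2 + 2 * (d + 2) * k) * (d + 1)) := by rw [← pow_add, ← pow_mul]
      _ ≤ 2 ^ (B * (k + 1)) := by
          apply Nat.pow_le_pow_right (by norm_num)
          rw [hB]
          have : (3 * D ^ 2 + 2 * (d + 2)) * (d + 1) * (k + 1)
            = (3 * D ^ 2 + 2 * (d + 2) * k) * (d + 1)
              + (3 * D ^ 2 * k + 2 * (d + 2)) * (d + 1) := by ring
          omega
  obtain ⟨P, hP, hhit⟩ := exists_hitting_tubes d Q (B * (k + 1)) hQ hb hQb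
  have hL : (Q : ℝ) / M = (3 * (d + 1)) ^ d * 2 ^ (k * (d + 1)) := by
    rw [div_eq_iff hM0.ne', hQdef, hMdef]; push_cast; rw [mul_pow _ ((2 : ℝ) ^ k)]; ring
  have hL2 : (2 : ℝ) ^ k ≤ (Q : ℝ) / M := by
    have h1 : (1 : ℝ) ≤ (3 * (d + 1)) ^ d := one_le_pow₀ (by linarith [Nat.cast_nonneg (α := ℝ) d])
    have h2 : (2 : ℝ) ^ k ≤ 2 ^ (k * (d + 1)) :=
      pow_le_pow_right₀ (by norm_num) (Nat.le_mul_of_pos_right _ (by omega))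
    rw [hL]
    calc (2 : ℝ) ^ k = 1 * 2 ^ k := by ring
      _ ≤ _ := by gcongr
  have h1k : (1 : ℝ) ≤ 2 ^ k := one_le_pow₀ (by norm_num)
  refine ⟨scaleSet d M Q P, fun x v hv => ?_, fun f hf => hL2.trans hf.2, fun T hT => ?_⟩
  · obtain ⟨s, hs, hfar⟩ := exists_start x v hv (R := Q / M + 1) (V := Q * (d + 1) / M)
      (by positivity) (by positivity)
    obtain ⟨a, c, hc, hi, happ⟩ := exists_discrete_segment hM hQ (x + s • v) v hv
    obtain ⟨p, hpP, hp⟩ := hhit (fun l => (a l : ZMod Q)) c hc hi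
    obtain ⟨j, hj, rfl⟩ := Finset.mem_image.1 hp
    obtain ⟨t, ht, hclose⟩ := happ j (Finset.mem_range.1 hj)
    set f : EuclideanSpace ℝ (Fin (d + 1)) :=
      WithLp.toLp 2 fun l => ((a l + (j : ℤ) * c l / (Q : ℤ) : ℤ) : ℝ) / M with hf
    have hdist : ‖x + (s + t) • v - f‖ ≤ (2 ^ k)⁻¹ := by
      have h1 := norm_le_of_coord (x + (s + t) • v - f) (r := 3 / M) (by positivity) fun l => by
        have h2 := hclose l
        have h3 : (x + (s + t) • v - f) l = (x + s • v) l + t * v l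
            - ((a l + (j : ℤ) * c l / (Q : ℤ) : ℤ) : ℝ) / M := by
          simp [hf, add_mul]; ring
        rwa [h3]
      refine h1.trans (le_of_eq ?_)
      rw [hMdef]; push_cast; field_simp
    refine ⟨s + t, ⟨add_nonneg hs.1 ht.1, ?_⟩, f, ⟨⟨fun l => a l + (j : ℤ) * c l / (Q : ℤ), ?_,
      fun l => rfl⟩, ?_⟩, hdist⟩
    · have h1 := hs.2
      have h2 := ht.2
      have h3 : ((2 : ℝ) * d + 6) * (3 * (d + 1)) ^ d * 2 ^ (k * (d + 1))
          = (2 * d + 6) * (Q / M) := by rw [hL]; ring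
      have h4 : (Q : ℝ) * (d + 1) / M = (d + 1) * (Q / M) := by ring
      rw [h3]; rw [h4] at h1 h2
      nlinarith
    · simpa using hpP
    · have h1 := hfar t ht
      have h2 : (2 ^ k : ℝ)⁻¹ ≤ 1 := inv_le_one_of_one_le₀ h1k
      have h3 := norm_sub_norm_le (x + (s + t) • v) f
      linarith
  · obtain ⟨hfin, hcount⟩ := scaleSet_count (d := d) hM hQ P T hT
    refine ⟨hfin, hcount.trans ?_⟩
    have hP' : (P.card : ℝ) ≤ Q ^ d * (B * (k + 1)) := by exact_mod_cast hP
    calc (P.card : ℝ) * (4 * T / (Q / M)) ^ (d + 1)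
        ≤ Q ^ d * (B * (k + 1)) * (4 * T / (Q / M)) ^ (d + 1) := by gcongr
      _ = B * (k + 1) * (M ^ (d + 1) / Q) * (4 * T) ^ (d + 1) := by
          rw [div_pow, div_pow]; field_simp; ring
      _ = _ := by
          have : (M : ℝ) ^ (d + 1) / Q = 1 / 2 ^ k := by
            rw [hQdef]; push_cast; field_simp
          rw [this, hB, hD]; push_cast; ring

/-! ### Union over the scales -/

/-- In every dimension `d+1` (`d ≥ 1`) there exists a dense forest
`F ⊆ ℝ^{d+1}` of finite density whose visibility function satisfies
`V(ε) = O_{η,d}(ε^{-2d-η})` for every `η > 0`. -/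
theorem dense_forest_with_finite_density (d : ℕ) (hd : 1 ≤ d) :
    ∃ F : Set (EuclideanSpace ℝ (Fin (d + 1))),
      -- finite density: limsup_{T → ∞} #(F ∩ B₂(0,T)) / T^{d+1} < ∞
      (∃ C : ℝ, ∀ᶠ T : ℝ in Filter.atTop,
        (F ∩ Metric.closedBall 0 T).Finite ∧
        (Nat.card ↥(F ∩ Metric.closedBall 0 T) : ℝ) ≤ C * T ^ (d + 1)) ∧
      -- dense forest with visibility V(ε) = O_{η,d}(ε^{-2d-η}) for every η > 0
      (∀ η : ℝ, 0 < η → ∃ C : ℝ, 0 < C ∧ ∃ ε₀ : ℝ, 0 < ε₀ ∧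
        ∀ ε : ℝ, 0 < ε → ε ≤ ε₀ →
          ∀ x v : EuclideanSpace ℝ (Fin (d + 1)), ‖v‖ = 1 →
            ∃ t : ℝ, t ∈ Set.Icc (0 : ℝ) (C * ε ^ (-(2 * (d : ℝ)) - η)) ∧
              ∃ f ∈ F, ‖x + t • v - f‖ ≤ ε) := by
  choose G hvis hfar hcount using exists_scale d
  set B : ℝ := (3 * ((3 * (d + 1)) ^ (d + 1)) ^ 2 + 2 * (d + 2)) * (d + 1) with hB
  have hB0 : 0 ≤ B := by positivity
  have hsum : Summable fun k : ℕ => B * ((k : ℝ) + 1) / 2 ^ k := by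
    have h1 := summable_pow_mul_geometric_of_norm_lt_one (R := ℝ) 1 (r := 1 / 2) (by norm_num)
    have h0 := summable_pow_mul_geometric_of_norm_lt_one (R := ℝ) 0 (r := 1 / 2) (by norm_num)
    refine ((h1.add h0).mul_left B).congr fun k => ?_
    rw [one_div, inv_pow]; ring
  refine ⟨⋃ k, G k, ⟨(∑' k : ℕ, B * ((k : ℝ) + 1) / 2 ^ k) * 4 ^ (d + 1), ?_⟩, ?_⟩
  · filter_upwards [Filter.eventually_ge_atTop (0 : ℝ)] with T hT
    classical
    let W : Finset (EuclideanSpace ℝ (Fin (d + 1))) :=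
      (Finset.range (⌈T⌉₊ + 1)).biUnion fun k => (hcount k T hT).1.toFinset
    have hsub : (⋃ k, G k) ∩ Metric.closedBall 0 T ⊆ W := by
      rintro p ⟨hp, hpT⟩
      obtain ⟨k, hk⟩ := Set.mem_iUnion.1 hp
      refine Finset.mem_coe.2 (Finset.mem_biUnion.2 ⟨k, ?_, (Set.Finite.mem_toFinset _).2 ⟨hk, hpT⟩⟩)
      have h1 := hfar k p hk
      have h2 := mem_closedBall_zero_iff.1 hpT
      have h3 : (k : ℝ) < 2 ^ k := by exact_mod_cast Nat.lt_two_pow_self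
      have h4 : (k : ℝ) ≤ (⌈T⌉₊ : ℝ) := by linarith [Nat.le_ceil T]
      have h5 : k ≤ ⌈T⌉₊ := by exact_mod_cast h4
      exact Finset.mem_range.2 (by omega)
    refine ⟨W.finite_toSet.subset hsub, ?_⟩
    rw [Nat.card_coe_set_eq]
    calc (((⋃ k, G k) ∩ Metric.closedBall 0 T).ncard : ℝ) ≤ W.card := by
          have := Set.ncard_le_ncard hsub W.finite_toSet
          rw [Set.ncard_coe_finset] at this
          exact_mod_cast this
      _ ≤ ∑ k ∈ Finset.range (⌈T⌉₊ + 1), ((hcount k T hT).1.toFinset.card : ℝ) := by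
          exact_mod_cast Finset.card_biUnion_le
      _ ≤ ∑ k ∈ Finset.range (⌈T⌉₊ + 1), B * ((k : ℝ) + 1) / 2 ^ k * (4 * T) ^ (d + 1) := by
          refine Finset.sum_le_sum fun k _ => ?_
          rw [← Set.ncard_eq_toFinset_card _ (hcount k T hT).1]
          exact (hcount k T hT).2
      _ ≤ (∑' k : ℕ, B * ((k : ℝ) + 1) / 2 ^ k) * (4 * T) ^ (d + 1) := by
          rw [← Finset.sum_mul]
          gcongr
          exact hsum.sum_le_tsum _ fun k _ => by positivity
      _ = _ := by rw [mul_pow]; ring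
  · intro η hη
    set A : ℝ := (2 * d + 6) * (3 * (d + 1)) ^ d with hA
    have hA0 : 0 < A := by positivity
    refine ⟨A * 2 ^ (d + 1), by positivity, 1, one_pos, fun ε hε hε1 x v hv => ?_⟩
    obtain ⟨n, hn1, hn2⟩ := exists_nat_pow_near_of_lt_one hε hε1
      (by norm_num : (0 : ℝ) < 1 / 2) (by norm_num)
    obtain ⟨t, ht, f, hf, hdist⟩ := hvis (n + 1) x v hv
    refine ⟨t, ⟨ht.1, ht.2.trans ?_⟩, f, Set.mem_iUnion.2 ⟨_, hf⟩, hdist.trans ?_⟩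
    · have h2n : (2 : ℝ) ^ n ≤ ε⁻¹ := by
        rw [le_inv_comm₀ (by positivity) hε]
        rwa [one_div, inv_pow] at hn2
      have hpow : (ε⁻¹) ^ (d + 1) ≤ ε ^ (-(2 * (d : ℝ)) - η) := by
        have h1 : (ε⁻¹) ^ (d + 1) = ε ^ (-((d : ℝ) + 1)) := by
          rw [Real.rpow_neg hε.le, inv_pow, ← Real.rpow_natCast]; push_cast; rfl
        rw [h1]
        apply Real.rpow_le_rpow_of_exponent_ge hε hε1
        have : (1 : ℝ) ≤ d := by exact_mod_cast hd
        linarith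
      calc A * 2 ^ ((n + 1) * (d + 1)) = A * 2 ^ (d + 1) * (2 ^ n) ^ (d + 1) := by ring
        _ ≤ A * 2 ^ (d + 1) * (ε⁻¹) ^ (d + 1) := by gcongr
        _ ≤ _ := by gcongr
    · rw [one_div, inv_pow] at hn1
      exact hn1.le
end

section
/- Let d ≥ 1, let (a_k)_{k≥0} be a sequence of real numbers, let ε > 0 and let V be a positive integer. Suppose that for every v' ∈ [−1,1]^d, every z ∈ ℝ^d and every integer K ≥ 0 there exists an integer k ∈ ⟦K, K+V⟧ with ‖k·v' + z − a_k·1_d‖_∞^{𝕋^d} ≤ ε. Then for every vector v = (1, v') with v' ∈ [−1,1]^d and every y = (y₁,…,y_{d+1}) ∈ ℝ^{d+1} with y₁ ≥ 0, the line segment I_{V+1}(v,y) = {y + t·v : 0 ≤ t ≤ V+1} satisfies dist_∞(F₁, I_{V+1}(v,y)) ≤ ε. -/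
/-!
With `y = (y₁, y')`, apply the hypothesis to `z = y' - y₁ v'` and `K = ⌈y₁⌉`. The integer `k` it
produces satisfies `y₁ ≤ k ≤ y₁ + V + 1`, so the segment meets the hyperplane `{x₁ = k}`, at the
point `(k, k v' + z)`. The points of `F₁` in that hyperplane are `(k, a_k 1_d + m)` with `m ∈ ℤ^d`,
at sup distance `‖k v' + z - a_k 1_d - m‖`; the infimum over `m` is the torus norm.
-/

open scoped BigOperators

/-- The forest `F₁` built from a sequence `(a_k)`:
`F₁ = {(k₁, a_{|k₁|}+k₂, …, a_{|k₁|}+k_{d+1}) : (k₁,…,k_{d+1}) ∈ ℤ^{d+1}}`. -/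
def forestF1 (d : ℕ) (a : ℕ → ℝ) : Set (Fin (d + 1) → ℝ) :=
  {p | ∃ k : Fin (d + 1) → ℤ,
    p = fun i => if i = 0 then (k 0 : ℝ) else a (k 0).natAbs + (k i : ℝ)}

/-- The line segment `I_V(v, y) = {y + t v : 0 ≤ t ≤ V}`. -/
def lineSeg (d : ℕ) (V : ℝ) (v y : Fin (d + 1) → ℝ) : Set (Fin (d + 1) → ℝ) :=
  {p | ∃ t : ℝ, 0 ≤ t ∧ t ≤ V ∧ p = y + t • v}

/-- `dist_∞(A, B) = inf {‖a - b‖_∞ : a ∈ A, b ∈ B}`. -/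
noncomputable def distInfSets {d : ℕ} (A B : Set (Fin d → ℝ)) : ℝ :=
  sInf {r | ∃ a ∈ A, ∃ b ∈ B, r = ‖a - b‖}

/-- The sup norm on the torus `𝕋^d`: `‖x‖_∞^{𝕋^d} = inf {‖x - m‖_∞ : m ∈ ℤ^d}`. -/
noncomputable def torusNorm {d : ℕ} (x : Fin d → ℝ) : ℝ :=
  sInf {r | ∃ m : Fin d → ℤ, r = ‖x - fun i => (m i : ℝ)‖}

/-- if for every `v' ∈ [-1,1]^d`, `z ∈ ℝ^d` and every integer
`K ≥ 0` some `k ∈ ⟦K, K+V⟧` satisfies `‖k v' + z - a_k 1_d‖_∞^{𝕋^d} ≤ ε`, then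
every segment `I_{V+1}((1, v'), y)` with `y₁ ≥ 0` comes `ε`-close to `F₁`. -/
theorem segment_close_to_forestF1 (d : ℕ) (hd : 1 ≤ d) (a : ℕ → ℝ) (ε : ℝ)
    (hε : 0 < ε) (V : ℕ) (hV : 0 < V)
    (h : ∀ v' : Fin d → ℝ, (∀ i, |v' i| ≤ 1) → ∀ z : Fin d → ℝ, ∀ K : ℕ,
      ∃ k : ℕ, K ≤ k ∧ k ≤ K + V ∧
        torusNorm ((k : ℝ) • v' + z - fun _ => a k) ≤ ε) :
    ∀ v' : Fin d → ℝ, (∀ i, |v' i| ≤ 1) →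
      ∀ y : Fin (d + 1) → ℝ, 0 ≤ y 0 →
        distInfSets (forestF1 d a)
          (lineSeg d ((V : ℝ) + 1) (Fin.cons 1 v') y) ≤ ε := by
  intro v' hv' y hy
  obtain ⟨k, hk1, hk2, hk⟩ := h v' hv' (fun i => y i.succ - y 0 * v' i) ⌈y 0⌉₊
  refine le_trans ?_ hk
  refine le_csInf ⟨_, fun _ => 0, rfl⟩ ?_
  rintro r ⟨m, rfl⟩
  set w : Fin d → ℝ := ((k : ℝ) • v' + (fun i => y i.succ - y 0 * v' i) - fun _ => a k) -
    fun i => (m i : ℝ) with hw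
  have hyk : y 0 ≤ k := (Nat.le_ceil _).trans (by exact_mod_cast hk1)
  have hkV : (k : ℝ) - y 0 ≤ V + 1 := by
    have h1 := Nat.ceil_lt_add_one hy
    have h2 : (k : ℝ) ≤ ⌈y 0⌉₊ + V := by exact_mod_cast hk2
    linarith
  have hbdd : BddBelow {r | ∃ p ∈ forestF1 d a,
      ∃ q ∈ lineSeg d ((V : ℝ) + 1) (Fin.cons 1 v') y, r = ‖p - q‖} := by
    refine ⟨0, ?_⟩
    rintro _ ⟨p, _, q, _, rfl⟩
    exact norm_nonneg _
  refine (csInf_le hbdd ⟨_, ⟨Fin.cons (k : ℤ) m, rfl⟩, _,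
    ⟨(k : ℝ) - y 0, sub_nonneg.2 hyk, hkV, rfl⟩, rfl⟩).trans ?_
  refine (pi_norm_le_iff_of_nonneg (norm_nonneg _)).2 fun i => ?_
  refine Fin.cases ?_ (fun j => ?_) i
  · simp
  · refine le_trans (le_of_eq ?_) (norm_le_pi_norm w j)
    rw [← norm_neg (w j)]
    congr 1
    simp [hw, Fin.succ_ne_zero]
    ring
end

section
/- Let d ≥ 1, let (a_k)_{k≥0} be a sequence of real numbers, let ε > 0 and let V ≥ ε^{−1} be a positive real number. Assume that for every q ∈ D₁^{(d)}(V) and every z ∈ ℝ^d there exists an integer k ∈ ⟦0, V⟧ with ‖k·q + z − a_k·1_d‖_∞^{𝕋^d} ≤ ε. Then for every v' ∈ [−1,1]^d and every z ∈ ℝ^d there exists an integer k ∈ ⟦0, V⟧ such that ‖k·v' + z − a_k·1_d‖_∞^{𝕋^d} ≤ 2ε. -/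
/-!
Put `b = ⌊V²⌋`. When `V ≥ 1`, rounding each coordinate of `b v'` to the nearest integer gives
`q ∈ D1 d V` with `‖v' - q‖_∞ ≤ 1 / (2b) ≤ 1 / V²` (`exists_mem_D1_close`), because `⌊x⌋ ≥ x / 2`
for `x ≥ 1`. For `k ≤ V` the points `k v'` and `k q` then differ by at most `1 / V ≤ ε`, and since
`torusNorm` is 1-Lipschitz for the sup norm (`torusNorm_le_add_norm_sub`), the `k` provided for `q`
works for `v'` at the cost of one more `ε`.

When `V < 1` the set `D1 d V` is empty and the assumption says nothing, but then `ε > 1`, and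
`k = 0` works because `torusNorm` never exceeds `1`.
-/

open scoped BigOperators

/-- `den(q)`: the least positive integer `b` with `b q ∈ ℤ^d`, i.e. the lcm of
the denominators of the coordinates of `q`. -/
def denVec {d : ℕ} (q : Fin d → ℚ) : ℕ :=
  Finset.univ.lcm fun i => (q i).den

/-- `D₁^{(d)}(V) = {q ∈ [-1,1]^d ∩ ℚ^d : den(q) ≤ V²}`. -/
def D1 (d : ℕ) (V : ℝ) : Set (Fin d → ℚ) :=
  {q | (∀ i, |q i| ≤ 1) ∧ (denVec q : ℝ) ≤ V ^ 2}

lemma torusNorm_le_norm_sub {d : ℕ} (x : Fin d → ℝ) (m : Fin d → ℤ) :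
    torusNorm x ≤ ‖x - fun i => (m i : ℝ)‖ :=
  csInf_le ⟨0, by rintro r ⟨m, rfl⟩; exact norm_nonneg _⟩ ⟨m, rfl⟩

lemma torusNorm_le_add_norm_sub {d : ℕ} (x y : Fin d → ℝ) :
    torusNorm x ≤ torusNorm y + ‖x - y‖ := by
  rw [← sub_le_iff_le_add]
  refine le_csInf ⟨_, 0, rfl⟩ ?_
  rintro r ⟨m, rfl⟩
  have h1 := torusNorm_le_norm_sub x m
  have h2 := norm_sub_le_norm_sub_add_norm_sub x y (fun i => (m i : ℝ))
  linarith

lemma torusNorm_le_one {d : ℕ} (x : Fin d → ℝ) : torusNorm x ≤ 1 := by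
  refine (torusNorm_le_norm_sub x fun i => ⌊x i⌋).trans ?_
  refine (pi_norm_le_iff_of_nonneg zero_le_one).2 fun i => ?_
  change |x i - (⌊x i⌋ : ℝ)| ≤ 1
  rw [abs_le]
  constructor <;> linarith [Int.floor_le (x i), Int.lt_floor_add_one (x i)]

/-- Rounding to the common denominator `⌊V²⌋` approximates a direction within `1 / V²`. -/
lemma exists_mem_D1_close {d : ℕ} {V : ℝ} (hV : 1 ≤ V) (v : Fin d → ℝ) (hv : ∀ i, |v i| ≤ 1) :
    ∃ q ∈ D1 d V, ∀ i, |v i - (q i : ℝ)| ≤ 1 / V ^ 2 := by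
  have hV2 : 1 ≤ V ^ 2 := one_le_pow₀ hV
  obtain ⟨b, hb⟩ : ∃ b : ℕ, b = ⌊V ^ 2⌋₊ := ⟨_, rfl⟩
  have hb1 : 1 ≤ b := hb ▸ (Nat.one_le_floor_iff _).2 hV2
  have hbV : (b : ℝ) ≤ V ^ 2 := hb ▸ Nat.floor_le (by positivity)
  have hVb : V ^ 2 < b + 1 := hb ▸ Nat.lt_floor_add_one _
  have hb1' : (1 : ℝ) ≤ b := by exact_mod_cast hb1
  have hb0 : (0 : ℝ) < b := by linarith
  refine ⟨fun i => (round (b * v i) : ℚ) / (b : ℚ), ⟨fun i => ?_, ?_⟩, fun i => ?_⟩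
  · -- The bound `b` is an integer, so rounding a number of `[-b, b]` cannot leave the interval.
    have hbv : |(b : ℝ) * v i| ≤ b := by
      rw [abs_mul, abs_of_pos hb0]
      exact mul_le_of_le_one_right hb0.le (hv i)
    have hr := abs_le.1 (abs_sub_round ((b : ℝ) * v i))
    have hbv' := abs_le.1 hbv
    have h1 : round ((b : ℝ) * v i) < (b : ℤ) + 1 := by
      have : (round ((b : ℝ) * v i) : ℝ) < b + 1 := by linarith
      exact_mod_cast this
    have h2 : -(b : ℤ) - 1 < round ((b : ℝ) * v i) := by
      have : -(b : ℝ) - 1 < (round ((b : ℝ) * v i) : ℝ) := by linarith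
      exact_mod_cast this
    have h3 : |round ((b : ℝ) * v i)| ≤ (b : ℤ) := abs_le.2 ⟨by omega, by omega⟩
    have hbq : (0 : ℚ) < b := by exact_mod_cast hb1
    rw [abs_div, abs_of_pos hbq, div_le_one hbq]
    exact_mod_cast h3
  · have hdvd : denVec (fun i => (round (b * v i) : ℚ) / (b : ℚ)) ∣ b := by
      refine Finset.lcm_dvd fun i _ => ?_
      have := Rat.den_dvd (round ((b : ℝ) * v i)) (b : ℤ)
      rw [Rat.divInt_eq_div] at this
      exact_mod_cast this
    exact le_trans (by exact_mod_cast Nat.le_of_dvd hb1 hdvd) hbV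
  · have hr := abs_sub_round ((b : ℝ) * v i)
    have he : v i - (((round ((b : ℝ) * v i) : ℚ) / (b : ℚ) : ℚ) : ℝ)
        = ((b : ℝ) * v i - round ((b : ℝ) * v i)) / b := by
      push_cast
      field_simp
    rw [he, abs_div, abs_of_pos hb0, div_le_div_iff₀ hb0 (by positivity)]
    nlinarith [abs_nonneg ((b : ℝ) * v i - round ((b : ℝ) * v i))]

/-- Lemma `lemreduc`: if the approximation property holds for all
rational directions in `D₁^{(d)}(V)` with quality `ε`, it holds for all
directions in `[-1,1]^d` with quality `2ε`. -/
theorem reduction_to_rational_directions (d : ℕ) (hd : 1 ≤ d) (a : ℕ → ℝ)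
    (ε V : ℝ) (hε : 0 < ε) (hV : 0 < V) (hVε : ε⁻¹ ≤ V)
    (h : ∀ q ∈ D1 d V, ∀ z : Fin d → ℝ,
      ∃ k : ℕ, (k : ℝ) ≤ V ∧
        torusNorm (((k : ℝ) • fun i => ((q i : ℝ))) + z - fun _ => a k) ≤ ε) :
    ∀ v' : Fin d → ℝ, (∀ i, |v' i| ≤ 1) → ∀ z : Fin d → ℝ,
      ∃ k : ℕ, (k : ℝ) ≤ V ∧
        torusNorm ((k : ℝ) • v' + z - fun _ => a k) ≤ 2 * ε := by
  intro v hv z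
  rcases lt_or_ge V 1 with hV1 | hV1
  · have hε1 : 1 ≤ ε := by
      by_contra! hlt
      linarith [(one_lt_inv₀ hε).2 hlt]
    exact ⟨0, by simpa using hV.le, (torusNorm_le_one _).trans (by linarith)⟩
  obtain ⟨q, hq, hclose⟩ := exists_mem_D1_close hV1 v hv
  obtain ⟨k, hkV, hk⟩ := h q hq z
  refine ⟨k, hkV, (torusNorm_le_add_norm_sub _
    (((k : ℝ) • fun i => ((q i : ℝ))) + z - fun _ => a k)).trans ?_⟩
  have hdist : ‖((k : ℝ) • v + z - fun _ => a k)
      - (((k : ℝ) • fun i => ((q i : ℝ))) + z - fun _ => a k)‖ ≤ ε := by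
    refine (pi_norm_le_iff_of_nonneg hε.le).2 fun i => ?_
    simp only [Pi.sub_apply, Pi.add_apply, Pi.smul_apply, smul_eq_mul, Real.norm_eq_abs]
    calc |(k : ℝ) * v i + z i - a k - (k * q i + z i - a k)|
        = k * |v i - q i| := by
          rw [← abs_of_nonneg (Nat.cast_nonneg k : (0 : ℝ) ≤ k), ← abs_mul,
            abs_of_nonneg (Nat.cast_nonneg k : (0 : ℝ) ≤ k)]
          ring_nf
      _ ≤ V * (1 / V ^ 2) := mul_le_mul hkV (hclose i) (abs_nonneg _) hV.le
      _ = V⁻¹ := by field_simp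
      _ ≤ ε := inv_le_of_inv_le₀ hε hVε
  linarith
end

section
/- Let d ≥ 1 and let K_d > 0 be a constant. Then there exists a real number θ such that, setting a_k := θ·k!, for every η > 0 there is a constant C = C(θ, η, d, K_d) > 0 such that for all integers V ≥ 1, all m ∈ ⟦0, K_d·V⟧^d \ {0} and all q ∈ D₁^{(d)}(V): |Σ_{k=V+1}^{2V} e(m·(k·q − a_k·1_d))| ≤ C·V^{1/2+η}. -/
/-!
The sum only depends on `M = ∑ m_i ≥ 1` and `α = m · q`: it is
`S(θ) = ∑_{V < k ≤ 2V} e(k α - M θ k!)`. Almost every `θ ∈ (0, 1]` works, by a moment argument.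

Orthogonality bounds `∫₀¹ |S(θ)|^{2p} dθ` by the number of solutions of
`x₁! + ⋯ + x_p! = y₁! + ⋯ + y_p!` with all variables in `(V, 2V]`. For `V ≥ p` both sides are
factorial-base expansions with admissible digits, so `y` takes its values among those of `x`;
this gives at most `p^p V^p` solutions, and the same bound is trivial for `V < p`
(`card_solutions_le`, `moment_le`).

Write `α = A / b`. In the range considered, the parameters `V`, `M`, `b`, `A` are all polynomially
bounded in `V`. Summing the normalised moments `|S|^{2p} / V^p` over all parameters with summable
weights of inverse polynomial size yields a function of `θ` with finite integral, hence
finite almost everywhere (`ae_weighted_bound`). So, for almost every `θ` and all `p` at once,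
`|S|^{2p} ≤ C_p V^{p + 14}`, that is `|S| ≤ C_p' V^{1/2 + 7/p}`, and it remains to take `p > 7/η`.
-/

open scoped BigOperators

/-- `e(x) = exp(2πix)`. -/
noncomputable def eTwoPi (x : ℝ) : ℂ := Complex.exp (2 * Real.pi * Complex.I * x)

section

open scoped Nat
open MeasureTheory

/-! ### Additive relations between factorials -/

/-- A factorial-base expansion with digits `a k ≤ k` below position `N` is smaller than `N!`. -/
lemma factorial_base_lt (a : ℕ → ℕ) (ha : ∀ k, a k ≤ k) (N : ℕ) :
    ∑ k ∈ Finset.range N, a k * k ! < N ! := by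
  induction N with
  | zero => simp
  | succ N ih =>
    rw [Finset.sum_range_succ, Nat.factorial_succ]
    have := Nat.mul_le_mul_right (N !) (ha N)
    nlinarith

lemma factorial_base_unique (a b : ℕ → ℕ) (ha : ∀ k, a k ≤ k) (hb : ∀ k, b k ≤ k) (N : ℕ)
    (h : ∑ k ∈ Finset.range N, a k * k ! = ∑ k ∈ Finset.range N, b k * k !) :
    ∀ k < N, a k = b k := by
  induction N with
  | zero => simp
  | succ N ih =>
    rw [Finset.sum_range_succ, Finset.sum_range_succ] at h
    have h1 := factorial_base_lt a ha N
    have h2 := factorial_base_lt b hb N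
    have h3 : a N = b N := by
      have e1 := congrArg (· / N !) h
      simpa [Nat.add_mul_div_right, Nat.factorial_pos, Nat.div_eq_of_lt h1,
        Nat.div_eq_of_lt h2] using e1
    rw [h3] at h
    intro k hk
    rcases Nat.lt_succ_iff_lt_or_eq.mp hk with hk | rfl
    · exact ih (by omega) k hk
    · exact h3

/-- Sums of `p` factorials of integers larger than `p` determine the set of summands. -/
lemma mem_range_of_sum_factorial_eq {p : ℕ} (x y : Fin p → ℕ) (hx : ∀ i, p < x i)
    (hy : ∀ i, p < y i) (h : ∑ i, (x i)! = ∑ i, (y i)!) (j : Fin p) : ∃ i, x i = y j := by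
  classical
  -- the digit at position `k` is the multiplicity of `k` among the summands
  have key : ∀ (z : Fin p → ℕ), (∀ i, p < z i) →
      ∀ k, (Finset.univ.filter fun i => z i = k).card ≤ k := by
    intro z hz k
    by_cases hk : p < k
    · exact (Finset.card_filter_le _ _).trans (by simpa using hk.le)
    · rw [Finset.card_eq_zero.mpr]
      · exact Nat.zero_le _
      · ext i
        have := hz i
        simp; omega
  have hsum : ∀ (z : Fin p → ℕ) (N : ℕ), (∀ i, z i < N) →
      ∑ k ∈ Finset.range N, (Finset.univ.filter fun i => z i = k).card * k !
        = ∑ i, (z i)! := by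
    intro z N hN
    rw [← Finset.sum_fiberwise_of_maps_to (s := Finset.univ) (t := Finset.range N) (g := z)
      (fun i _ => Finset.mem_range.mpr (hN i))]
    refine Finset.sum_congr rfl fun k _ => ?_
    rw [Finset.sum_congr rfl (g := fun _ => k !)]
    · simp
    · intro i hi
      rw [(Finset.mem_filter.mp hi).2]
  set N := ∑ i, (x i + y i) + 1 with hNdef
  have hle : ∀ i, x i + y i < N := fun i => by
    have := Finset.single_le_sum (f := fun i => x i + y i) (fun i _ => Nat.zero_le _)
      (Finset.mem_univ i)
    omega
  have hu := factorial_base_unique _ _ (key x hx) (key y hy) N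
    (by rw [hsum x N fun i => by have := hle i; omega,
          hsum y N fun i => by have := hle i; omega, h]) (y j) (by have := hle j; omega)
  have hpos : 0 < (Finset.univ.filter fun i => y i = y j).card :=
    Finset.card_pos.mpr ⟨j, by simp⟩
  rw [← hu] at hpos
  obtain ⟨i, hi⟩ := Finset.card_pos.mp hpos
  exact ⟨i, by simpa using hi⟩

/-- For a fixed left-hand side, the equation `∑ (x i)! = ∑ (y i)!` has at most `p ^ p` solutions
`y` in `(V, 2V]`: for `V ≥ p` the entries of `y` are entries of `x`, and for `V < p` the trivial
bound suffices. -/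
lemma card_solutions_le (p V : ℕ) (x : Fin p → ℕ)
    (hx : x ∈ Fintype.piFinset fun _ : Fin p => Finset.Icc (V + 1) (2 * V)) :
    ((Fintype.piFinset fun _ : Fin p => Finset.Icc (V + 1) (2 * V)).filter
      fun y => ∑ i, (x i)! = ∑ i, (y i)!).card ≤ p ^ p := by
  classical
  by_cases hV : p ≤ V
  · calc _ ≤ (Fintype.piFinset fun _ : Fin p => Finset.univ.image x).card := by
          refine Finset.card_le_card fun y hy => ?_
          rw [Finset.mem_filter] at hy
          rw [Fintype.mem_piFinset] at hx hy ⊢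
          intro j
          have := mem_range_of_sum_factorial_eq x y
            (fun i => by have := Finset.mem_Icc.mp (hx i); omega)
            (fun i => by have := Finset.mem_Icc.mp (hy.1 i); omega) hy.2 j
          simpa using this
      _ ≤ p ^ p := by
          rw [Fintype.card_piFinset]
          simp only [Finset.prod_const, Finset.card_univ, Fintype.card_fin]
          exact Nat.pow_le_pow_left (Finset.card_image_le.trans (by simp)) _
  · refine (Finset.card_filter_le _ _).trans ?_
    rw [Fintype.card_piFinset]
    simp only [Finset.prod_const, Finset.card_univ, Fintype.card_fin, Nat.card_Icc]
    exact Nat.pow_le_pow_left (by omega) _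

/-! ### The character `e(x)` -/

lemma eTwoPi_eq (x : ℝ) : eTwoPi x = Complex.exp ((2 * Real.pi * x : ℝ) * Complex.I) := by
  unfold eTwoPi
  congr 1
  push_cast
  ring

lemma eTwoPi_norm (x : ℝ) : ‖eTwoPi x‖ = 1 := by
  rw [eTwoPi_eq, Complex.norm_exp_ofReal_mul_I]

lemma eTwoPi_add (x y : ℝ) : eTwoPi (x + y) = eTwoPi x * eTwoPi y := by
  unfold eTwoPi
  rw [← Complex.exp_add]
  congr 1
  push_cast
  ring

lemma eTwoPi_sum {ι : Type*} (s : Finset ι) (f : ι → ℝ) :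
    eTwoPi (∑ i ∈ s, f i) = ∏ i ∈ s, eTwoPi (f i) := by
  unfold eTwoPi
  rw [← Complex.exp_sum]
  congr 1
  push_cast
  rw [Finset.mul_sum]

lemma eTwoPi_conj (x : ℝ) : (starRingEnd ℂ) (eTwoPi x) = eTwoPi (-x) := by
  rw [eTwoPi_eq, eTwoPi_eq, ← Complex.exp_conj, map_mul, Complex.conj_ofReal,
    Complex.conj_I]
  congr 1
  push_cast
  ring

lemma continuous_eTwoPi : Continuous eTwoPi := by
  unfold eTwoPi
  fun_prop

lemma norm_integral_eTwoPi_le (c : ℝ) (n : ℤ) :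
    ‖∫ θ in (0 : ℝ)..1, eTwoPi (c + n * θ)‖ ≤ if n = 0 then 1 else 0 := by
  split_ifs with h
  · simp [h, eTwoPi_norm]
  · have h0 : (2 * Real.pi * Complex.I * n : ℂ) ≠ 0 := by
      simp [h, Real.pi_ne_zero]
    have : ∀ θ : ℝ, eTwoPi (c + n * θ)
        = eTwoPi c * Complex.exp ((2 * Real.pi * Complex.I * n) * θ) := by
      intro θ
      rw [eTwoPi_add]
      congr 1
      unfold eTwoPi
      congr 1
      push_cast
      ring
    simp_rw [this]
    rw [intervalIntegral.integral_const_mul, integral_exp_mul_complex h0]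
    have h1 : Complex.exp (2 * Real.pi * Complex.I * n) = 1 := by
      rw [mul_comm]
      exact Complex.exp_int_mul_two_pi_mul_I n
    simp [h1]

/-! ### Even moments of the exponential sum -/

/-- The exponential sum `∑_{V < k ≤ 2V} e(k α - M θ k!)`. -/
noncomputable def facSum (V M : ℕ) (α θ : ℝ) : ℂ :=
  ∑ k ∈ Finset.Icc (V + 1) (2 * V), eTwoPi (k * α - M * θ * k !)

lemma continuous_facSum (V M : ℕ) (α : ℝ) : Continuous (facSum V M α) := by
  unfold facSum
  exact continuous_finsetSum _ fun k _ => continuous_eTwoPi.comp (by fun_prop)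

lemma facSum_pow (V M p : ℕ) (α θ : ℝ) :
    facSum V M α θ ^ p = ∑ x ∈ Fintype.piFinset fun _ : Fin p => Finset.Icc (V + 1) (2 * V),
      eTwoPi ((∑ i, (x i : ℝ)) * α - M * θ * (∑ i, (x i)! : ℕ)) := by
  unfold facSum
  rw [Finset.sum_pow']
  refine Finset.sum_congr rfl fun x _ => ?_
  rw [← eTwoPi_sum]
  congr 1
  push_cast
  rw [Finset.sum_sub_distrib, Finset.sum_mul, Finset.mul_sum]

/-- Even moments in `θ`: by orthogonality, the `2p`-th moment is at most the number of solutions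
of `∑ (x i)! = ∑ (y i)!` in `(V, 2V]`. -/
lemma moment_le (V M p : ℕ) (hM : M ≠ 0) (α : ℝ) :
    ∫ θ in (0 : ℝ)..1, ‖facSum V M α θ‖ ^ (2 * p) ≤ (p : ℝ) ^ p * (V : ℝ) ^ p := by
  classical
  set P := Fintype.piFinset fun _ : Fin p => Finset.Icc (V + 1) (2 * V) with hP
  have h1 : ∀ θ : ℝ, ((‖facSum V M α θ‖ ^ (2 * p) : ℝ) : ℂ) =
      ∑ x ∈ P, ∑ y ∈ P, eTwoPi (((∑ i, (x i : ℝ)) - ∑ i, (y i : ℝ)) * α +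
        ((M * ((∑ i, (y i)! : ℕ) - (∑ i, (x i)! : ℕ)) : ℤ) : ℝ) * θ) := by
    intro θ
    have : ((‖facSum V M α θ‖ ^ (2 * p) : ℝ) : ℂ)
        = facSum V M α θ ^ p * (starRingEnd ℂ) (facSum V M α θ ^ p) := by
      rw [Complex.mul_conj, Complex.normSq_eq_norm_sq, norm_pow]
      congr 1
      ring
    rw [this, facSum_pow, map_sum, Finset.sum_mul_sum]
    refine Finset.sum_congr rfl fun x _ => Finset.sum_congr rfl fun y _ => ?_
    rw [eTwoPi_conj, ← eTwoPi_add]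
    congr 1
    push_cast
    ring
  have h2 : ((∫ θ in (0 : ℝ)..1, ‖facSum V M α θ‖ ^ (2 * p) : ℝ) : ℂ) =
      ∑ x ∈ P, ∑ y ∈ P, ∫ θ in (0 : ℝ)..1,
        eTwoPi (((∑ i, (x i : ℝ)) - ∑ i, (y i : ℝ)) * α +
        ((M * ((∑ i, (y i)! : ℕ) - (∑ i, (x i)! : ℕ)) : ℤ) : ℝ) * θ) := by
    have hc : ∀ c n : ℝ, Continuous fun θ : ℝ => eTwoPi (c + n * θ) := fun c n =>
      continuous_eTwoPi.comp (by fun_prop)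
    rw [← intervalIntegral.integral_ofReal]
    simp_rw [h1]
    rw [intervalIntegral.integral_finsetSum]
    · refine Finset.sum_congr rfl fun x _ => ?_
      rw [intervalIntegral.integral_finsetSum]
      exact fun y _ => (hc _ _).intervalIntegrable _ _
    · exact fun x _ => (continuous_finsetSum _ fun y _ => hc _ _).intervalIntegrable _ _
  have hcard : P.card = V ^ p := by
    rw [hP, Fintype.card_piFinset]
    simp only [Finset.prod_const, Finset.card_univ, Fintype.card_fin, Nat.card_Icc]
    congr 1
    omega
  calc ∫ θ in (0 : ℝ)..1, ‖facSum V M α θ‖ ^ (2 * p)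
      ≤ ‖((∫ θ in (0 : ℝ)..1, ‖facSum V M α θ‖ ^ (2 * p) : ℝ) : ℂ)‖ := by
        rw [Complex.norm_real]
        exact Real.le_norm_self _
    _ ≤ ∑ x ∈ P, ∑ y ∈ P, (if ∑ i, (x i)! = ∑ i, (y i)! then (1 : ℝ) else 0) := by
        rw [h2]
        refine (norm_sum_le _ _).trans (Finset.sum_le_sum fun x _ => ?_)
        refine (norm_sum_le _ _).trans (Finset.sum_le_sum fun y _ => ?_)
        refine (norm_integral_eTwoPi_le _ _).trans ?_
        by_cases h : ∑ i, (x i)! = ∑ i, (y i)!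
        · rw [if_pos h]
          split_ifs <;> norm_num
        · rw [if_neg h, if_neg]
          intro h0
          rcases mul_eq_zero.mp h0 with h0 | h0
          · exact hM (by exact_mod_cast h0)
          · exact h (by exact_mod_cast (sub_eq_zero.mp h0).symm)
    _ ≤ ∑ x ∈ P, (p : ℝ) ^ p := by
        refine Finset.sum_le_sum fun x hx => ?_
        rw [Finset.sum_boole]
        exact_mod_cast card_solutions_le p V x hx
    _ = (p : ℝ) ^ p * (V : ℝ) ^ p := by
        rw [Finset.sum_const, hcard, nsmul_eq_mul]
        push_cast
        ring

/-! ### Choice of `θ` -/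

/-- Countably many nonnegative functions with uniformly bounded integrals are, at almost every
point, bounded after multiplication by summable weights. -/
lemma ae_weighted_bound {ι : Type*} [Countable ι] (f : ι → ℝ → ℝ) (hc : ∀ i, Continuous (f i))
    (h0 : ∀ i x, 0 ≤ f i x) (B : ℝ) (hB : ∀ i, ∫ x in (0 : ℝ)..1, f i x ≤ B)
    (w : ι → ℝ) (hw0 : ∀ i, 0 ≤ w i) (hw : Summable w) :
    ∀ᵐ x ∂(volume.restrict (Set.Ioc (0 : ℝ) 1)), ∃ C : ℝ, ∀ i, w i * f i x ≤ C := by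
  have hm : ∀ i, Measurable fun x => ENNReal.ofReal (w i * f i x) := fun i =>
    ((hc i).measurable.const_mul _).ennreal_ofReal
  have hint : ∀ i, ∫⁻ x in Set.Ioc (0 : ℝ) 1, ENNReal.ofReal (w i * f i x)
      ≤ ENNReal.ofReal (w i * B) := by
    intro i
    rw [← ofReal_integral_eq_lintegral_ofReal]
    · refine ENNReal.ofReal_le_ofReal ?_
      rw [integral_const_mul, ← intervalIntegral.integral_of_le zero_le_one]
      exact mul_le_mul_of_nonneg_left (hB i) (hw0 i)
    · exact (((hc i).const_mul _ |>.intervalIntegrable 0 1).1)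
    · exact Filter.Eventually.of_forall fun x => mul_nonneg (hw0 i) (h0 i x)
  have htot : ∫⁻ x in Set.Ioc (0 : ℝ) 1, ∑' i, ENNReal.ofReal (w i * f i x) ≠ ⊤ := by
    rw [lintegral_tsum fun i => (hm i).aemeasurable]
    refine ne_top_of_le_ne_top ?_ (ENNReal.tsum_le_tsum hint)
    exact (hw.mul_right B).tsum_ofReal_ne_top
  filter_upwards [ae_lt_top (Measurable.tsum hm) htot] with x hx
  refine ⟨(∑' i, ENNReal.ofReal (w i * f i x)).toReal, fun i => ?_⟩
  exact (ENNReal.ofReal_le_iff_le_toReal hx.ne).mp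
    (ENNReal.le_tsum (f := fun i => ENNReal.ofReal (w i * f i x)) i)

lemma summable_nat_weight : Summable fun n : ℕ => 1 / ((n : ℝ) + 1) ^ 2 := by
  have := (summable_nat_add_iff 1).mpr (Real.summable_one_div_nat_pow.mpr one_lt_two)
  simpa using this

lemma summable_int_weight : Summable fun n : ℤ => 1 / (|(n : ℝ)| + 1) ^ 2 := by
  refine Summable.of_nat_of_neg ?_ ?_ <;> simpa using summable_nat_weight

/-- The summable weight on the parameters `(V, M - 1, b, A)` of the sums with `α = A / b`. -/
noncomputable def wt (i : ((ℕ × ℕ) × ℕ) × ℤ) : ℝ :=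
  1 / ((i.1.1.1 : ℝ) + 1) ^ 2 * (1 / ((i.1.1.2 : ℝ) + 1) ^ 2) * (1 / ((i.1.2 : ℝ) + 1) ^ 2) *
    (1 / (|(i.2 : ℝ)| + 1) ^ 2)

lemma summable_wt : Summable wt := by
  have h0 : ∀ n : ℕ, 0 ≤ 1 / ((n : ℝ) + 1) ^ 2 := fun n => by positivity
  have h0' : ∀ n : ℤ, 0 ≤ 1 / (|(n : ℝ)| + 1) ^ 2 := fun n => by positivity
  have h2 := summable_nat_weight.mul_of_nonneg summable_nat_weight h0 h0
  have h3 := h2.mul_of_nonneg summable_nat_weight (fun i => mul_nonneg (h0 i.1) (h0 i.2)) h0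
  exact h3.mul_of_nonneg summable_int_weight
    (fun i => mul_nonneg (mul_nonneg (h0 i.1.1) (h0 i.1.2)) (h0 i.2)) h0'

/-- A single `θ` works for every moment order `p` and all parameters, with polynomial loss. -/
lemma exists_theta : ∃ θ : ℝ, ∀ p : ℕ, ∃ C : ℝ, ∀ (V M b : ℕ) (A : ℤ),
    wt (((V, M), b), A) * (‖facSum V (M + 1) (A / b) θ‖ ^ (2 * p) / (V : ℝ) ^ p) ≤ C := by
  have hae : ∀ p : ℕ, ∀ᵐ θ ∂(volume.restrict (Set.Ioc (0 : ℝ) 1)), ∃ C : ℝ,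
      ∀ i : ((ℕ × ℕ) × ℕ) × ℤ,
        wt i * (‖facSum i.1.1.1 (i.1.1.2 + 1) (i.2 / i.1.2) θ‖ ^ (2 * p) / (i.1.1.1 : ℝ) ^ p)
          ≤ C := by
    intro p
    have hc : ∀ i : ((ℕ × ℕ) × ℕ) × ℤ, Continuous fun θ : ℝ =>
        ‖facSum i.1.1.1 (i.1.1.2 + 1) (i.2 / i.1.2) θ‖ ^ (2 * p) / (i.1.1.1 : ℝ) ^ p := by
      intro i
      have h1 := continuous_facSum i.1.1.1 (i.1.1.2 + 1) (i.2 / i.1.2)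
      exact Continuous.div_const (Continuous.pow (Continuous.norm h1) (2 * p)) _
    refine ae_weighted_bound _ hc (fun i x => ?_) ((p : ℝ) ^ p) (fun i => ?_) wt
      (fun i => ?_) summable_wt
    · positivity
    · rw [intervalIntegral.integral_div]
      exact div_le_of_le_mul₀ (by positivity) (by positivity)
        (moment_le _ _ p (Nat.succ_ne_zero _) _)
    · unfold wt
      positivity
  have : (ae (volume.restrict (Set.Ioc (0 : ℝ) 1))).NeBot := by
    rw [ae_neBot]
    intro h
    simpa using congrArg (fun μ => μ Set.univ) h
  obtain ⟨θ, hθ⟩ := (ae_all_iff.mpr hae).exists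
  exact ⟨θ, fun p => (hθ p).imp fun C hC V M b A => hC (((V, M), b), A)⟩

/-! ### The theorem -/

/-- The number `m · q` is a fraction with denominator `den(q)`. -/
lemma exists_fraction {d : ℕ} (m : Fin d → ℤ) (q : Fin d → ℚ) :
    0 < denVec q ∧ ∃ A : ℤ, (∑ i, (m i : ℝ) * (q i : ℝ)) = (A : ℝ) / (denVec q : ℝ) := by
  have hpos : 0 < denVec q := by
    refine Nat.pos_of_ne_zero fun h => ?_
    rw [denVec, Finset.lcm_eq_zero_iff] at h
    obtain ⟨i, -, hi⟩ := h
    exact (q i).den_nz hi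
  refine ⟨hpos, ∑ i, m i * ((q i).num * (denVec q / (q i).den : ℕ)), ?_⟩
  rw [eq_div_iff (by positivity), Finset.sum_mul]
  rw [Int.cast_sum]
  refine Finset.sum_congr rfl fun i _ => ?_
  have hd : (q i).den ∣ denVec q := Finset.dvd_lcm (Finset.mem_univ i)
  have hne : ((q i).den : ℝ) ≠ 0 := by exact_mod_cast (q i).den_nz
  rw [Int.cast_mul, Int.cast_mul, Int.cast_natCast, Nat.cast_div hd hne, Rat.cast_def (q i)]
  field_simp

end

/-- Theorem `mainthm`: there is a real `θ` such that with
`a_k := θ · k!`, for every `η > 0` the exponential sums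
`∑_{k=V+1}^{2V} e(m·(k q - a_k 1_d))` are `≤ C V^{1/2+η}`, uniformly in
`m ∈ ⟦0, K_d V⟧^d \ {0}` and `q ∈ D₁^{(d)}(V)`. -/
theorem exponential_sum_factorial_bound (d : ℕ) (hd : 1 ≤ d)
    (Kd : ℝ) (hKd : 0 < Kd) :
    ∃ θ : ℝ, ∀ η : ℝ, 0 < η → ∃ C : ℝ, 0 < C ∧
      ∀ V : ℕ, 1 ≤ V →
      ∀ m : Fin d → ℤ, (∀ i, 0 ≤ m i ∧ (m i : ℝ) ≤ Kd * V) → m ≠ 0 →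
      ∀ q ∈ D1 d (V : ℝ),
        ‖∑ k ∈ Finset.Icc (V + 1) (2 * V),
            eTwoPi (∑ i, (m i : ℝ) * ((k : ℝ) * (q i : ℝ) - θ * (Nat.factorial k)))‖
          ≤ C * (V : ℝ) ^ ((1 : ℝ) / 2 + η) := by
  obtain ⟨θ, hθ⟩ := exists_theta
  refine ⟨θ, fun η hη => ?_⟩
  obtain ⟨p, hp⟩ := exists_nat_gt (7 / η)
  have hp0 : (0 : ℝ) < p := lt_trans (by positivity) hp
  have hpη : 7 ≤ p * η := ((div_lt_iff₀ hη).mp hp).le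
  have hp1 : 2 * p ≠ 0 := by
    have : p ≠ 0 := by rintro rfl; simp at hp0
    omega
  obtain ⟨C, hC⟩ := hθ p
  set D : ℝ := d * Kd with hD
  have hD0 : 0 < D := by have : (0 : ℝ) < d := by exact_mod_cast hd
                         positivity
  set E : ℝ := max C 1 * (2 * D * 2 * (D + 1)) ^ 2 with hE
  have hE0 : 0 < E := by
    have : 0 < max C 1 := lt_max_of_lt_right one_pos
    positivity
  refine ⟨E ^ ((1 : ℝ) / (2 * p : ℕ)), by positivity, fun V hV m hm hm0 q hq => ?_⟩
  have hV1 : (1 : ℝ) ≤ V := by exact_mod_cast hV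
  have hV0 : (0 : ℝ) < V := by linarith
  have hsum0 : 0 < ∑ i, m i := by
    obtain ⟨i, hi⟩ := Function.ne_iff.mp hm0
    exact Finset.sum_pos' (fun i _ => (hm i).1)
      ⟨i, Finset.mem_univ _, lt_of_le_of_ne (hm i).1 (Ne.symm hi)⟩
  obtain ⟨M, hM⟩ : ∃ M : ℕ, ∑ i, m i = ((M + 1 : ℕ) : ℤ) :=
    ⟨(∑ i, m i).toNat - 1, by omega⟩
  have hMR : ∑ i, (m i : ℝ) = ((M + 1 : ℕ) : ℝ) := by exact_mod_cast hM
  have hMD : ((M + 1 : ℕ) : ℝ) ≤ D * V := by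
    rw [← hMR, hD]
    calc ∑ i, (m i : ℝ) ≤ ∑ _i : Fin d, Kd * V := Finset.sum_le_sum fun i _ => (hm i).2
      _ = d * Kd * V := by simp [mul_assoc]
  obtain ⟨hb0, A, hA⟩ := exists_fraction m q
  set b := denVec q with hb
  have hb0' : (0 : ℝ) < b := by exact_mod_cast hb0
  have hbV : (b : ℝ) ≤ (V : ℝ) ^ 2 := hq.2
  have hAabs : |(A : ℝ)| ≤ D * V * V ^ 2 := by
    have h1 : |∑ i, (m i : ℝ) * (q i : ℝ)| ≤ D * V := by
      refine (Finset.abs_sum_le_sum_abs _ _).trans (le_trans ?_ hMD)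
      rw [← hMR]
      refine Finset.sum_le_sum fun i _ => ?_
      have h2 : (0 : ℝ) ≤ m i := by exact_mod_cast (hm i).1
      have h3 : |(q i : ℝ)| ≤ 1 := by exact_mod_cast hq.1 i
      rw [abs_mul, abs_of_nonneg h2]
      exact mul_le_of_le_one_right h2 h3
    rw [hA, abs_div, abs_of_pos hb0', div_le_iff₀ hb0'] at h1
    exact h1.trans (by gcongr)
  have hS : ∑ k ∈ Finset.Icc (V + 1) (2 * V),
      eTwoPi (∑ i, (m i : ℝ) * ((k : ℝ) * (q i : ℝ) - θ * (Nat.factorial k)))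
      = facSum V (M + 1) (A / b) θ := by
    unfold facSum
    refine Finset.sum_congr rfl fun k _ => ?_
    congr 1
    rw [← hA, ← hMR, Finset.mul_sum, Finset.sum_mul, Finset.sum_mul, ← Finset.sum_sub_distrib]
    exact Finset.sum_congr rfl fun i _ => by ring
  rw [hS]
  set S := ‖facSum V (M + 1) (A / b) θ‖ with hSdef
  have hwt := hC V M b A
  have hprod : ((V : ℝ) + 1) * ((M : ℝ) + 1) * ((b : ℝ) + 1) * (|(A : ℝ)| + 1)
      ≤ (2 * D * 2 * (D + 1)) * (V : ℝ) ^ 7 := by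
    have h1 : (V : ℝ) + 1 ≤ 2 * V := by linarith
    have h2 : (M : ℝ) + 1 ≤ D * V := by exact_mod_cast hMD
    have h3 : (b : ℝ) + 1 ≤ 2 * (V : ℝ) ^ 2 := by nlinarith
    have h4 : |(A : ℝ)| + 1 ≤ (D + 1) * (V : ℝ) ^ 3 := by
      have : (1 : ℝ) ≤ (V : ℝ) ^ 3 := one_le_pow₀ hV1
      nlinarith
    calc _ ≤ (2 * V) * (D * V) * (2 * (V : ℝ) ^ 2) * ((D + 1) * (V : ℝ) ^ 3) := by gcongr
      _ = _ := by ring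
  have hpow : S ^ (2 * p) ≤ E * ((V : ℝ) ^ p * (V : ℝ) ^ 14) := by
    set Q := ((V : ℝ) + 1) * ((M : ℝ) + 1) * ((b : ℝ) + 1) * (|(A : ℝ)| + 1) with hQ
    have hQ0 : 0 < Q := by positivity
    have hw : wt (((V, M), b), A) = 1 / Q ^ 2 := by
      simp only [wt, hQ]
      field_simp
    rw [hw, one_div_mul_eq_div, div_div, div_le_iff₀ (by positivity)] at hwt
    calc S ^ (2 * p) ≤ C * ((V : ℝ) ^ p * Q ^ 2) := hwt
      _ ≤ max C 1 * ((V : ℝ) ^ p * ((2 * D * 2 * (D + 1)) * (V : ℝ) ^ 7) ^ 2) := by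
          gcongr
          exact le_max_left _ _
      _ = _ := by rw [hE]; ring
  -- `V ^ (p + 14) ≤ (V ^ (1 / 2 + η)) ^ (2 p)` because `7 ≤ p η`
  have hfin : S ^ (2 * p) ≤
      (E ^ ((1 : ℝ) / (2 * p : ℕ)) * (V : ℝ) ^ ((1 : ℝ) / 2 + η)) ^ (2 * p) := by
    rw [mul_pow, ← Real.rpow_natCast (E ^ _), ← Real.rpow_mul hE0.le,
      one_div_mul_cancel (by exact_mod_cast hp1), Real.rpow_one]
    refine hpow.trans (mul_le_mul_of_nonneg_left ?_ hE0.le)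
    rw [← pow_add, ← Real.rpow_natCast, ← Real.rpow_natCast, ← Real.rpow_mul hV0.le]
    refine Real.rpow_le_rpow_of_exponent_le hV1 ?_
    push_cast
    nlinarith
  exact le_of_pow_le_pow_left₀ hp1 (by positivity) hfin
end

section
/- Let r ≥ 1 be an integer and let (α_k)_{k≥0} be a sequence of positive integers with α_k = o(α_{k+1}) as k → ∞. Then for all sufficiently large integers V (depending on r and the sequence), the set {(l₁,…,l_r, n₁,…,n_r) ∈ ⟦V+1, 2V⟧^{2r} : Σ_{i=1}^r α_{l_i} = Σ_{i=1}^r α_{n_i}} coincides with the set {(l₁,…,l_r, n₁,…,n_r) ∈ ⟦V+1, 2V⟧^{2r} : the multiset {l₁,…,l_r} equals the multiset {n₁,…,n_r}}. -/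
/-!
Once `r * α k < α (k + 1)` holds from some index `k₀` on, the largest index occurring in a sum of at
most `r` terms dominates: at most `r` terms of smaller index add up to strictly less than that one
term (`sum_lt_sum_of_dominated`). Hence in an equality of two such sums the largest index occurring
on either side occurs on both sides; cancelling it and inducting on the number of terms shows that
the two multisets of indices agree (`multiset_eq_of_sum_eq`). The range `⟦V+1, 2V⟧` matters only
through its lower end, which exceeds `k₀`.
-/

open scoped BigOperators

/-- A sum of at most `r` terms whose indices are all below `b` is smaller than any sum containing
`α b`. -/
lemma sum_lt_sum_of_dominated {r k₀ : ℕ} {α : ℕ → ℕ} (hαpos : ∀ k, 0 < α k)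
    (hstep : ∀ k ≥ k₀, r * α k < α (k + 1)) (hmono : ∀ a b, k₀ ≤ a → a ≤ b → α a ≤ α b)
    {M N : Multiset ℕ} (hM : M.card ≤ r) (hMk : ∀ a ∈ M, k₀ ≤ a)
    {b : ℕ} (hb : b ∈ N) (hMb : ∀ a ∈ M, a < b) :
    (M.map α).sum < (N.map α).sum := by
  have hbN : α b ≤ (N.map α).sum :=
    Multiset.single_le_sum (fun _ _ => Nat.zero_le _) _ (Multiset.mem_map_of_mem α hb)
  refine lt_of_lt_of_le ?_ hbN
  rcases Multiset.empty_or_exists_mem M with rfl | ⟨a, ha⟩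
  · simpa using hαpos b
  · have hka := hMk a ha
    have hab := hMb a ha
    have hsum : (M.map α).sum ≤ (M.map α).card • α (b - 1) := by
      refine Multiset.sum_le_card_nsmul _ _ fun x hx => ?_
      obtain ⟨c, hc, rfl⟩ := Multiset.mem_map.1 hx
      have hcb := hMb c hc
      exact hmono _ _ (hMk c hc) (by omega)
    have hlt := hstep (b - 1) (by omega)
    rw [Nat.sub_add_cancel (by omega)] at hlt
    rw [Multiset.card_map, smul_eq_mul] at hsum
    exact lt_of_le_of_lt (hsum.trans (Nat.mul_le_mul_right _ hM)) hlt

/-- Multisets of at most `r` indices beyond `k₀` are determined by their sums; equality of the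
cardinalities is not needed. -/
lemma multiset_eq_of_sum_eq {r k₀ : ℕ} {α : ℕ → ℕ} (hαpos : ∀ k, 0 < α k)
    (hstep : ∀ k ≥ k₀, r * α k < α (k + 1)) (hmono : ∀ a b, k₀ ≤ a → a ≤ b → α a ≤ α b)
    (m : ℕ) : ∀ M N : Multiset ℕ, (M + N).card ≤ m → M.card ≤ r → N.card ≤ r →
      (∀ a ∈ M, k₀ ≤ a) → (∀ a ∈ N, k₀ ≤ a) → (M.map α).sum = (N.map α).sum → M = N := by
  induction m with
  | zero =>
    intro M N h _ _ _ _ _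
    rw [Multiset.card_add] at h
    rw [Multiset.card_eq_zero.1 (by omega : M.card = 0),
      Multiset.card_eq_zero.1 (by omega : N.card = 0)]
  | succ m ih =>
    intro M N h hM hN hMk hNk hs
    by_cases h0 : M + N = 0
    · obtain ⟨rfl, rfl⟩ := add_eq_zero.1 h0
      rfl
    obtain ⟨c, hc, hmax⟩ := Finset.exists_max_image (M + N).toFinset id
      (Multiset.toFinset_nonempty.2 h0)
    simp only [Multiset.mem_toFinset, Multiset.mem_add, id] at hc hmax
    have hcM : c ∈ M := by
      by_contra hcM
      exact (sum_lt_sum_of_dominated hαpos hstep hmono hM hMk (hc.resolve_left hcM)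
        fun a ha => lt_of_le_of_ne (hmax a (Or.inl ha)) fun e => hcM (e ▸ ha)).ne hs
    have hcN : c ∈ N := by
      by_contra hcN
      exact (sum_lt_sum_of_dominated hαpos hstep hmono hN hNk hcM
        fun a ha => lt_of_le_of_ne (hmax a (Or.inr ha)) fun e => hcN (e ▸ ha)).ne hs.symm
    obtain ⟨M, rfl⟩ := Multiset.exists_cons_of_mem hcM
    obtain ⟨N, rfl⟩ := Multiset.exists_cons_of_mem hcN
    simp only [Multiset.card_add, Multiset.card_cons, Multiset.map_cons,
      Multiset.sum_cons] at h hM hN hs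
    rw [ih M N (by rw [Multiset.card_add]; omega) (by omega) (by omega)
      (fun a ha => hMk a (Multiset.mem_cons_of_mem ha))
      (fun a ha => hNk a (Multiset.mem_cons_of_mem ha)) (by omega)]

/-- Lemma `lemcompatge`, first part: if `(α_k)` is a sequence of
positive integers with `α_k = o(α_{k+1})`, then for all large enough `V`, tuples
`(l, n) ∈ ⟦V+1, 2V⟧^{2r}` satisfy `∑ α_{l_i} = ∑ α_{n_i}` exactly when the
multisets `{l₁,…,l_r}` and `{n₁,…,n_r}` coincide. -/
theorem equal_sums_iff_multiset_eq (r : ℕ) (hr : 1 ≤ r) (α : ℕ → ℕ)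
    (hαpos : ∀ k, 0 < α k)
    (hα : ∀ δ : ℝ, 0 < δ → ∃ k₀ : ℕ, ∀ k ≥ k₀, (α k : ℝ) ≤ δ * (α (k + 1) : ℝ)) :
    ∃ V₀ : ℕ, ∀ V ≥ V₀,
      ∀ l n : Fin r → ℕ,
        (∀ i, l i ∈ Finset.Icc (V + 1) (2 * V)) →
        (∀ i, n i ∈ Finset.Icc (V + 1) (2 * V)) →
        ((∑ i, α (l i)) = (∑ i, α (n i)) ↔
          Multiset.map l Finset.univ.val = Multiset.map n Finset.univ.val) := by
  -- With `δ = 1 / (r + 1)`, positivity of `α k` makes `r * α k < α (k + 1)` strict.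
  obtain ⟨k₀, hk₀⟩ := hα (1 / (r + 1)) (by positivity)
  have hstep' : ∀ k ≥ k₀, (r + 1) * α k ≤ α (k + 1) := by
    intro k hk
    have h := hk₀ k hk
    rw [one_div, inv_mul_eq_div, le_div_iff₀ (by positivity), mul_comm] at h
    exact_mod_cast h
  have hstep : ∀ k ≥ k₀, r * α k < α (k + 1) := by
    intro k hk
    have h := hstep' k hk
    have hp := hαpos k
    rw [Nat.succ_mul] at h
    omega
  have hmono : ∀ a b, k₀ ≤ a → a ≤ b → α a ≤ α b := by
    intro a b ha hab
    induction b, hab using Nat.le_induction with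
    | base => exact le_rfl
    | succ b hab ih =>
      exact ih.trans ((Nat.le_mul_of_pos_left _ (Nat.succ_pos r)).trans (hstep' b (ha.trans hab)))
  refine ⟨k₀, fun V hV l n hl hn => ?_⟩
  have hsum : ∀ f : Fin r → ℕ,
      ∑ i, α (f i) = ((Multiset.map f Finset.univ.val).map α).sum := by
    intro f
    rw [Multiset.map_map]
    rfl
  have hlow : ∀ f : Fin r → ℕ, (∀ i, f i ∈ Finset.Icc (V + 1) (2 * V)) →
      ∀ a ∈ Multiset.map f Finset.univ.val, k₀ ≤ a := by
    intro f hf a ha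
    obtain ⟨i, _, rfl⟩ := Multiset.mem_map.1 ha
    have := (Finset.mem_Icc.1 (hf i)).1
    omega
  rw [hsum l, hsum n]
  refine ⟨fun h => ?_, fun h => by rw [h]⟩
  exact multiset_eq_of_sum_eq hαpos hstep hmono _ _ _ le_rfl (by simp) (by simp)
    (hlow l hl) (hlow n hn) h
end

section
/- Let r ≥ 1 be an integer and let (α_k)_{k≥0} be a sequence of positive integers with α_k = o(α_{k+1}) as k → ∞. Then for all sufficiently large integers V (depending on r and the sequence), the number of tuples (l₁,…,l_r, n₁,…,n_r) ∈ ⟦V+1, 2V⟧^{2r} with Σ_{i=1}^r α_{l_i} = Σ_{i=1}^r α_{n_i} is at most r!·V^r. -/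
/-!
From some index on, `(r + 1) * α k ≤ α (k + 1)`, so a sum of at most `r` terms `α k` with
`k < M` is smaller than `α M`. Hence two equal sums of `r` terms have the same largest index, and
removing it inductively shows that the two multisets of indices agree
(`multiset_eq_of_sum_eq`). Each solution `(l, n)` is then of the form `(l, l ∘ σ)` for a
permutation `σ` of `Fin r`, and there are `V ^ r * r!` pairs `(l, σ)`.
-/

open scoped BigOperators

lemma alpha_mono {r k₀ : ℕ} {α : ℕ → ℕ} (h : ∀ k ≥ k₀, (r + 1) * α k ≤ α (k + 1))
    {a b : ℕ} (ha : k₀ ≤ a) (hab : a ≤ b) : α a ≤ α b := by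
  induction b, hab using Nat.le_induction with
  | base => exact le_rfl
  | succ b hab ih => nlinarith [h b (ha.trans hab)]

/-- If two sums are equal, no index `a` of the first exceeds the largest index `b` of the second:
otherwise the second sum is at most `r * α b < α (b + 1) ≤ α a`. -/
lemma top_le {r k₀ : ℕ} {α : ℕ → ℕ} (hpos : ∀ k, 0 < α k)
    (h : ∀ k ≥ k₀, (r + 1) * α k ≤ α (k + 1)) {s t : Multiset ℕ}
    (ht : t.card ≤ r) (htk : ∀ x ∈ t, k₀ ≤ x)
    (heq : (s.map α).sum = (t.map α).sum) {a b : ℕ} (ha : a ∈ s) (hb : b ∈ t)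
    (hbmax : ∀ x ∈ t, x ≤ b) : a ≤ b := by
  by_contra! hlt
  have h1 : α a ≤ (s.map α).sum :=
    Multiset.single_le_sum (by simp) _ (Multiset.mem_map_of_mem α ha)
  have h2 : (t.map α).sum ≤ t.card * α b := by
    have := Multiset.sum_le_card_nsmul (t.map α) (α b) (by
      intro y hy
      obtain ⟨x, hx, rfl⟩ := Multiset.mem_map.1 hy
      exact alpha_mono h (htk x hx) (hbmax x hx))
    simpa using this
  have h3 : α (b + 1) ≤ α a := alpha_mono h ((htk b hb).trans (Nat.le_succ b)) hlt
  have h4 := h b (htk b hb)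
  have h5 := Nat.mul_le_mul_right (α b) ht
  nlinarith [hpos b]

/-- A sum of `n ≤ r` terms with indices at least `k₀` determines the multiset of its indices. -/
lemma multiset_eq_of_sum_eq_s8 {r k₀ : ℕ} {α : ℕ → ℕ} (hpos : ∀ k, 0 < α k)
    (h : ∀ k ≥ k₀, (r + 1) * α k ≤ α (k + 1)) :
    ∀ n ≤ r, ∀ s t : Multiset ℕ, s.card = n → t.card = n →
      (∀ x ∈ s, k₀ ≤ x) → (∀ x ∈ t, k₀ ≤ x) →
      (s.map α).sum = (t.map α).sum → s = t := by
  intro n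
  induction n with
  | zero =>
    intro _ s t hs ht _ _ _
    rw [Multiset.card_eq_zero.1 hs, Multiset.card_eq_zero.1 ht]
  | succ n ih =>
    intro hn s t hs ht hsk htk heq
    have exmax : ∀ u : Multiset ℕ, u.card = n + 1 → ∃ a ∈ u, ∀ x ∈ u, x ≤ a := by
      intro u hu
      have hne : u.toFinset.Nonempty := by
        obtain ⟨x, hx⟩ := Multiset.card_pos_iff_exists_mem.1 (by omega : 0 < u.card)
        exact ⟨x, by simpa using hx⟩
      obtain ⟨a, ha, hmax⟩ := u.toFinset.exists_max_image id hne
      exact ⟨a, by simpa using ha, fun x hx => hmax x (by simpa using hx)⟩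
    obtain ⟨a, ha, hamax⟩ := exmax s hs
    obtain ⟨b, hb, hbmax⟩ := exmax t ht
    obtain rfl : a = b := le_antisymm
      (top_le hpos h (by omega) htk heq ha hb hbmax)
      (top_le hpos h (by omega) hsk heq.symm hb ha hamax)
    obtain ⟨s, rfl⟩ := Multiset.exists_cons_of_mem ha
    obtain ⟨t, rfl⟩ := Multiset.exists_cons_of_mem hb
    simp only [Multiset.map_cons, Multiset.sum_cons, Multiset.card_cons] at heq hs ht
    rw [ih (by omega) s t (by omega) (by omega)
      (fun x hx => hsk x (Multiset.mem_cons_of_mem hx))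
      (fun x hx => htk x (Multiset.mem_cons_of_mem hx)) (by omega)]

/-- Families with the same multiset of values differ by a permutation of the index type, since
their fibers have equal cardinalities. -/
lemma exists_perm_of_map_eq {ι : Type*} [Fintype ι] {f g : ι → ℕ}
    (h : Finset.univ.val.map f = Finset.univ.val.map g) :
    ∃ σ : Equiv.Perm ι, f = g ∘ σ := by
  have hc : ∀ c, Nonempty ({a // f a = c} ≃ {a // g a = c}) := by
    intro c
    rw [← Fintype.card_eq, Fintype.card_subtype, Fintype.card_subtype]
    have := congrArg (Multiset.count c) h
    rw [Multiset.count_map, Multiset.count_map] at this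
    simpa [Finset.card_def, eq_comm] using this
  refine ⟨Equiv.ofFiberEquiv fun c => (hc c).some, ?_⟩
  funext a
  exact (Equiv.ofFiberEquiv_map _ a).symm

/-- Lemma `lemcompatge`, second part: if `(α_k)` is a sequence of
positive integers with `α_k = o(α_{k+1})`, then for all large enough `V`, the
number of tuples `(l, n) ∈ ⟦V+1, 2V⟧^{2r}` with `∑ α_{l_i} = ∑ α_{n_i}` is at
most `r! · V^r`. -/
theorem card_equal_sums_le (r : ℕ) (hr : 1 ≤ r) (α : ℕ → ℕ)
    (hαpos : ∀ k, 0 < α k)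
    (hα : ∀ δ : ℝ, 0 < δ → ∃ k₀ : ℕ, ∀ k ≥ k₀, (α k : ℝ) ≤ δ * (α (k + 1) : ℝ)) :
    ∃ V₀ : ℕ, ∀ V ≥ V₀,
      (((Fintype.piFinset fun _ : Fin r => Finset.Icc (V + 1) (2 * V)) ×ˢ
          (Fintype.piFinset fun _ : Fin r => Finset.Icc (V + 1) (2 * V))).filter
        (fun p => (∑ i, α (p.1 i)) = ∑ i, α (p.2 i))).card
        ≤ Nat.factorial r * V ^ r := by
  obtain ⟨k₀, hk₀⟩ := hα (1 / (r + 1 : ℝ)) (by positivity)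
  have h : ∀ k ≥ k₀, (r + 1) * α k ≤ α (k + 1) := by
    intro k hk
    have := hk₀ k hk
    rw [one_div_mul_eq_div, le_div_iff₀ (by positivity)] at this
    rw [mul_comm]
    exact_mod_cast this
  refine ⟨k₀, fun V hV => ?_⟩
  set S := Fintype.piFinset fun _ : Fin r => Finset.Icc (V + 1) (2 * V) with hS
  calc _ ≤ ((S ×ˢ (Finset.univ : Finset (Equiv.Perm (Fin r)))).image
            (fun q => (q.1, q.1 ∘ q.2))).card := by
        apply Finset.card_le_card
        rintro ⟨l, m⟩ hp
        simp only [Finset.mem_filter, Finset.mem_product] at hp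
        obtain ⟨⟨hl, hm⟩, heq⟩ := hp
        have hge : ∀ f ∈ S, ∀ x ∈ Finset.univ.val.map f, k₀ ≤ x := by
          intro f hf x hx
          obtain ⟨i, -, rfl⟩ := Multiset.mem_map.1 hx
          have := Finset.mem_Icc.1 (Fintype.mem_piFinset.1 hf i)
          omega
        have hms : Finset.univ.val.map m = Finset.univ.val.map l :=
          multiset_eq_of_sum_eq_s8 hαpos h r le_rfl _ _ (by simp) (by simp)
            (hge m hm) (hge l hl) (by
              rw [Multiset.map_map, Multiset.map_map]
              exact heq.symm)
        obtain ⟨σ, hσ⟩ := exists_perm_of_map_eq hms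
        exact Finset.mem_image.2
          ⟨(l, σ), Finset.mem_product.2 ⟨hl, Finset.mem_univ σ⟩, by rw [hσ]⟩
    _ ≤ (S ×ˢ (Finset.univ : Finset (Equiv.Perm (Fin r)))).card := Finset.card_image_le
    _ = Nat.factorial r * V ^ r := by
        rw [Finset.card_product, Finset.card_univ, Fintype.card_perm, Fintype.card_fin, hS,
          Fintype.card_piFinset_const, Nat.card_Icc, mul_comm]
        congr 2
        omega
end
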